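/- arXiv:math/0702066 — 7 statements merged into one kernel-verified Lean document; each statement's English description precedes it below -/
import Mathlib

section
/- For all integers n ≥ 1 and d ≥ 1 there is a constant C(d,n) such that the following holds. Let P(x) = Σ_{|I| ≤ d} c_I x^I be a real polynomial in n variables of total degree at most d (written in multi-index notation), not identically zero, and set M = max_I |c_I|. Then for every δ > 0, the Lebesgue measure of the set {x ∈ ℝⁿ : |x| ≤ 1 and |P(x)| ≤ δ} is at most C(d,n)·(δ/M)^{1/dⁿ}. -/
/-!
If a univariate polynomial `p` of degree at most `d` satisfies `|p| ≤ δ` on a subset of `[-1, 1]`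
of large measure, that subset contains `d + 1` well separated points, and Lagrange interpolation at
these points makes every coefficient of `p` small. Hence a single large coefficient of `p` forces
its sublevel set to have measure at most a constant times `δ ^ (1 / d)`.

A coefficient of `P` of size `M` forces `|P x| ≥ c * M` at some point `x` of the cube `[-1, 1]ⁿ`, by
applying the univariate bound in one variable after the other. On every line through `x` the
restriction of `P` then has constant coefficient `P x`, so each of these lines meets the sublevel
set in a set of length controlled uniformly. Averaging over the dilations about `x` of ratio
`t ∈ [1/2, 1]`, which distort volume by a bounded factor, turns this into a bound for the volume. It
gives the exponent `1 / d`, better than `1 / dⁿ`, because no slicing by coordinates is iterated.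
-/

open MeasureTheory Metric Set
open scoped ENNReal NNReal Finset

section Lagrange

variable {𝕜 ι : Type*} [NormedField 𝕜] {s : Finset ι} {v : ι → 𝕜} {r : ℝ}

theorem norm_coeff_nodal_le (hv : ∀ i ∈ s, ‖v i‖ ≤ 1) (k : ℕ) :
    ‖(Lagrange.nodal s v).coeff k‖ ≤ 2 ^ #s := by
  have hsplits : (Lagrange.nodal s v).Splits :=
    Polynomial.Splits.prod fun i _ => Polynomial.Splits.X_sub_C (v i)
  have hroots : ∀ z ∈ (Lagrange.nodal s v).roots, ‖z‖ ≤ 1 := by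
    intro z hz
    have hzero : ∏ i ∈ s, (z - v i) = 0 :=
      Lagrange.eval_nodal.symm.trans (Polynomial.isRoot_of_mem_roots hz)
    obtain ⟨i, hi, hzi⟩ := Finset.prod_eq_zero_iff.1 hzero
    rw [sub_eq_zero.1 hzi]
    exact hv i hi
  have hchoose := Polynomial.coeff_le_of_roots_le (f := RingHom.id 𝕜) (B := 1) k
    Lagrange.nodal_monic (by simpa using hsplits) (by simpa using hroots)
  rw [Polynomial.map_id, one_pow, one_mul, Lagrange.natDegree_nodal] at hchoose
  exact hchoose.trans (mod_cast Nat.choose_le_two_pow _ _)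

variable {i : ι}

theorem norm_nodalWeight_le [DecidableEq ι] (hr : 0 < r) (hsep : ∀ j ∈ s.erase i, r ≤ ‖v i - v j‖) :
    ‖Lagrange.nodalWeight s v i‖ ≤ r⁻¹ ^ #(s.erase i) := by
  rw [Lagrange.nodalWeight, norm_prod, ← Finset.prod_const]
  refine Finset.prod_le_prod (fun _ _ => norm_nonneg _) fun j hj => ?_
  rw [norm_inv]
  exact inv_anti₀ hr (hsep j hj)

theorem norm_coeff_basis_le [DecidableEq ι] (hr : 0 < r) (hv : ∀ i ∈ s, ‖v i‖ ≤ 1)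
    (hsep : (s : Set ι).Pairwise fun i j => r ≤ ‖v i - v j‖) (hi : i ∈ s) (k : ℕ) :
    ‖(Lagrange.basis s v i).coeff k‖ ≤ (2 / r) ^ (#s - 1) := by
  have hweight : ‖Lagrange.nodalWeight s v i‖ ≤ r⁻¹ ^ #(s.erase i) :=
    norm_nodalWeight_le hr fun j hj =>
      hsep hi (Finset.mem_of_mem_erase hj) (Finset.ne_of_mem_erase hj).symm
  have hnodal : ‖(Lagrange.nodal (s.erase i) v).coeff k‖ ≤ 2 ^ #(s.erase i) :=
    norm_coeff_nodal_le (fun j hj => hv j (Finset.mem_of_mem_erase hj)) k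
  rw [Lagrange.basis_eq_prod_sub_inv_mul_nodal_div hi, ← Lagrange.nodal_erase_eq_nodal_div hi,
    Polynomial.coeff_C_mul, norm_mul, ← Finset.card_erase_of_mem hi, div_eq_inv_mul, mul_pow]
  gcongr

theorem norm_coeff_le_of_separated_nodes {p : Polynomial 𝕜} {δ : ℝ} (hr : 0 < r)
    (hv : ∀ i ∈ s, ‖v i‖ ≤ 1) (hsep : (s : Set ι).Pairwise fun i j => r ≤ ‖v i - v j‖)
    (hdeg : p.degree < #s) (hp : ∀ i ∈ s, ‖p.eval (v i)‖ ≤ δ) (k : ℕ) :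
    ‖p.coeff k‖ ≤ #s * (δ * (2 / r) ^ (#s - 1)) := by
  classical
  have hinj : InjOn v s := fun i hi j hj hij => by
    by_contra hne
    exact hr.not_ge (by simpa [hij] using hsep hi hj hne)
  rw [Lagrange.eq_interpolate hinj hdeg, Lagrange.interpolate_apply, Polynomial.finsetSum_coeff,
    ← nsmul_eq_mul]
  refine (norm_sum_le _ _).trans (Finset.sum_le_card_nsmul _ _ _ fun i hi => ?_)
  rw [Polynomial.coeff_C_mul, norm_mul]
  exact mul_le_mul (hp i hi) (norm_coeff_basis_le hr hv hsep hi k) (norm_nonneg _)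
    ((norm_nonneg _).trans (hp i hi))

end Lagrange

section Packing

variable {X : Type*} [PseudoEMetricSpace X] {ε : ℝ≥0} {A : Set X}

theorem measure_le_of_packingNumber_le [MeasurableSpace X] {μ : Measure X} {m : ℕ} {c : ℝ≥0∞}
    (hball : ∀ x ∈ A, μ (closedEBall x ε) ≤ c) (hA : packingNumber ε A ≤ m) : μ A ≤ m * c := by
  have hfin : packingNumber ε A ≠ ⊤ := ne_top_of_le_ne_top (ENat.natCast_ne_top m) hA
  have hcard : (maximalSeparatedSet ε A).encard ≤ m := (encard_maximalSeparatedSet hfin).trans_le hA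
  obtain ⟨N, hN⟩ := (finite_of_encard_le_coe hcard).exists_finset_coe
  have hcover : A ⊆ ⋃ x ∈ N, closedEBall x ε := by
    simpa [← hN] using isCover_iff_subset_iUnion_closedEBall.1 (isCover_maximalSeparatedSet hfin)
  have hNA : ∀ x ∈ N, x ∈ A := fun x hx => maximalSeparatedSet_subset (hN.subset hx)
  rw [← hN, encard_coe_eq_coe_finsetCard, Nat.cast_le] at hcard
  calc μ A ≤ μ (⋃ x ∈ N, closedEBall x ε) := measure_mono hcover
    _ ≤ ∑ x ∈ N, μ (closedEBall x ε) := measure_biUnion_finset_le _ _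
    _ ≤ #N • c := Finset.sum_le_card_nsmul _ _ _ fun x hx => hball x (hNA x hx)
    _ ≤ m * c := by rw [nsmul_eq_mul]; gcongr

theorem exists_finset_isSeparated_of_lt_packingNumber {m : ℕ} (hA : m < packingNumber ε A) :
    ∃ s : Finset X, #s = m + 1 ∧ (s : Set X) ⊆ A ∧ IsSeparated ε (s : Set X) := by
  simp only [packingNumber, lt_iSup_iff] at hA
  obtain ⟨N, hNA, hNsep, hN⟩ := hA
  obtain ⟨t, htN, ht⟩ := exists_subset_encard_eq (Order.add_one_le_of_lt hN)
  obtain ⟨s, rfl⟩ := (finite_of_encard_eq_coe (k := m + 1) (mod_cast ht)).exists_finset_coe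
  rw [encard_coe_eq_coe_finsetCard] at ht
  exact ⟨s, mod_cast ht, htN.trans hNA, hNsep.subset htN⟩

end Packing

section Univariate

variable {p : Polynomial ℝ} {d : ℕ} {r δ : ℝ}

theorem abs_coeff_le_of_lt_volume (hdeg : p.natDegree ≤ d) (hr : 0 < r) {E : Set ℝ}
    (hE : E ⊆ Icc (-1) 1) (hvol : ENNReal.ofReal (2 * r * d) < volume E)
    (hp : ∀ t ∈ E, |p.eval t| ≤ δ) (k : ℕ) :
    |p.coeff k| ≤ (d + 1) * (δ * (2 / r) ^ d) := by
  lift r to ℝ≥0 using hr.le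
  have hpack : d < packingNumber r E := by
    by_contra! h
    refine hvol.not_ge ?_
    calc volume E ≤ d * (2 * r) :=
          measure_le_of_packingNumber_le (fun x _ => (Real.volume_closedEBall x r).le) h
      _ = ENNReal.ofReal (2 * r * d) := by
          rw [ENNReal.ofReal_mul (by positivity), ENNReal.ofReal_mul two_pos.le]
          simp [mul_comm]
  obtain ⟨s, hcard, hsE, hsep⟩ := exists_finset_isSeparated_of_lt_packingNumber hpack
  have hdist : (s : Set ℝ).Pairwise fun x y => (r : ℝ) ≤ ‖x - y‖ := hsep.mono' fun x y hxy => by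
    rw [edist_nndist, ENNReal.coe_lt_coe] at hxy
    exact dist_eq_norm x y ▸ hxy.le
  have hlt : p.degree < #s := by
    rw [hcard]
    exact (Polynomial.degree_le_of_natDegree_le hdeg).trans_lt (mod_cast d.lt_succ_self)
  simpa [hcard] using norm_coeff_le_of_separated_nodes (v := id) hr
    (fun x hx => abs_le.2 (hE (hsE hx))) hdist hlt (fun x hx => hp x (hsE hx)) k

theorem volume_sublevel_Icc_le (hdeg : p.natDegree ≤ d) {s η : ℝ} (hs : 0 ≤ s) (hsd : s * d ≤ 1)
    (hδ : 0 < δ) (hη : 0 < η) {k : ℕ} (hk : η ≤ |p.coeff k|) :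
    volume {t : ℝ | t ∈ Icc (-1) 1 ∧ |p.eval t| ≤ δ} ≤
      ENNReal.ofReal (4 * (d + 1) * ((d + 2) * δ / η) ^ s) := by
  have hu : 0 < (d + 2) * δ / η := by positivity
  set u := (d + 2) * δ / η with hu_def
  rcases le_total 1 u with h1 | h1
  · calc volume {t : ℝ | t ∈ Icc (-1) 1 ∧ |p.eval t| ≤ δ}
        ≤ volume (Icc (-1 : ℝ) 1) := measure_mono fun t ht => ht.1
      _ = ENNReal.ofReal (2 * 1 * 1) := by rw [Real.volume_Icc]; norm_num
      _ ≤ ENNReal.ofReal (4 * (d + 1) * u ^ s) := by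
          gcongr
          · norm_num
          · linarith [d.cast_nonneg (α := ℝ)]
          · exact Real.one_le_rpow h1 hs
  · by_contra! hvol
    have hcoeff : |p.coeff k| ≤ (d + 1) * (δ * (2 / (2 * u ^ s)) ^ d) :=
      abs_coeff_le_of_lt_volume hdeg (by positivity) (fun t ht => ht.1)
        (hvol.trans_le' (ENNReal.ofReal_le_ofReal (by nlinarith [Real.rpow_pos_of_pos hu s])))
        (fun t ht => ht.2) k
    have hpow : (2 / (2 * u ^ s)) ^ d ≤ u⁻¹ := by
      rw [div_mul_cancel_left₀ two_ne_zero, inv_pow, ← Real.rpow_mul_natCast hu.le]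
      gcongr
      simpa using Real.rpow_le_rpow_of_exponent_ge hu h1 hsd
    have hlt : (d + 1) * (δ * u⁻¹) < η := by
      rw [hu_def, inv_div]
      field_simp
      linarith
    have : (d + 1) * (δ * (2 / (2 * u ^ s)) ^ d) ≤ (d + 1) * (δ * u⁻¹) := by gcongr
    linarith

/-- A bound for the ratio between a coefficient of a real univariate polynomial of degree at most
`d` and the maximum of its absolute value on `[-1, 1]`. The value comes from interpolation at nodes
at distance `1 / (d + 1)` and is not optimal. -/
noncomputable def coeffBound (d : ℕ) : ℝ :=
  (d + 1) * (2 * (d + 1)) ^ d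

theorem coeffBound_pos (d : ℕ) : 0 < coeffBound d := by
  unfold coeffBound
  positivity

theorem exists_abs_coeff_le_coeffBound_mul_abs_eval (hdeg : p.natDegree ≤ d) (k : ℕ) :
    ∃ t ∈ Icc (-1 : ℝ) 1, |p.coeff k| ≤ coeffBound d * |p.eval t| := by
  obtain ⟨t, ht, hmax⟩ := isCompact_Icc.exists_isMaxOn (nonempty_Icc.2 (by norm_num))
    (p.continuous.abs.continuousOn (s := Icc (-1) 1))
  have hvol : ENNReal.ofReal (2 * (1 / (d + 1)) * d) < volume (Icc (-1 : ℝ) 1) := by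
    rw [Real.volume_Icc, ENNReal.ofReal_lt_ofReal_iff (by norm_num)]
    field_simp
    linarith
  have hcoeff :=
    abs_coeff_le_of_lt_volume hdeg (by positivity) subset_rfl hvol (fun x hx => hmax hx) k
  refine ⟨t, ht, hcoeff.trans_eq ?_⟩
  rw [coeffBound, div_div_eq_mul_div, div_one]
  ring

end Univariate

section Homothety

variable {V : Type*} [NormedAddCommGroup V] [NormedSpace ℝ V] [FiniteDimensional ℝ V]
  [MeasurableSpace V] [BorelSpace V] (μ : Measure V) [μ.IsAddHaarMeasure]

theorem measure_le_measure_preimage_homothety (E : Set V) (x : V) {t : ℝ} (ht : t ∈ Ioc 0 1) :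
    μ E ≤ μ ((fun y => x + t • y) ⁻¹' E) := by
  have hscale : 1 ≤ |(t ^ Module.finrank ℝ V)⁻¹| := by
    rw [abs_of_pos (by have := ht.1; positivity)]
    exact one_le_inv₀ (pow_pos ht.1 _) |>.2 (pow_le_one₀ ht.1.le ht.2)
  calc μ E = 1 * μ ((x + ·) ⁻¹' E) := by rw [measure_preimage_add, one_mul]
    _ ≤ ENNReal.ofReal |(t ^ Module.finrank ℝ V)⁻¹| * μ ((x + ·) ⁻¹' E) := by
        gcongr
        exact ENNReal.one_le_ofReal.2 hscale
    _ = μ ((t • ·) ⁻¹' ((x + ·) ⁻¹' E)) := (Measure.addHaar_preimage_smul μ ht.1.ne' _).symm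

theorem measure_le_of_volume_line_le {E : Set V} (hE : MeasurableSet E) {x : V} {R : ℝ}
    (hER : E ⊆ closedBall x R) {K : ℝ≥0∞}
    (hK : ∀ y, volume {t : ℝ | t ∈ Icc (1 / 2) 1 ∧ x + t • y ∈ E} ≤ K) :
    μ E ≤ 2 * (K * μ (closedBall 0 (2 * R))) := by
  let ν : Measure ℝ := volume.restrict (Icc (1 / 2) 1)
  let ρ : Measure V := μ.restrict (closedBall 0 (2 * R))
  let S : Set (ℝ × V) := (fun z => x + z.1 • z.2) ⁻¹' E
  have hS : MeasurableSet S := hE.preimage (by fun_prop)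
  have hslice : ∀ t ∈ Icc (1 / 2 : ℝ) 1, μ E ≤ ρ (Prod.mk t ⁻¹' S) := by
    intro t ht
    have ht0 : 0 < t := by linarith [ht.1]
    have hball : Prod.mk t ⁻¹' S ⊆ closedBall 0 (2 * R) := fun y hy => by
      have hty : t * ‖y‖ ≤ R := by
        simpa [norm_smul, abs_of_pos ht0] using hER hy
      rw [mem_closedBall_zero_iff]
      nlinarith [ht.1, norm_nonneg y]
    rw [Measure.restrict_eq_self μ hball]
    exact measure_le_measure_preimage_homothety μ E x ⟨ht0, ht.2⟩
  have hlower : 2⁻¹ * μ E ≤ (ν.prod ρ) S := by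
    have hν : ν univ = 2⁻¹ := by
      rw [Measure.restrict_apply_univ, Real.volume_Icc, sub_half, one_div,
        ENNReal.ofReal_inv_of_pos two_pos, ENNReal.ofReal_ofNat]
    calc 2⁻¹ * μ E = ∫⁻ _, μ E ∂ν := by rw [lintegral_const, hν, mul_comm]
      _ ≤ ∫⁻ t, ρ (Prod.mk t ⁻¹' S) ∂ν := setLIntegral_mono' measurableSet_Icc hslice
      _ = (ν.prod ρ) S := (Measure.prod_apply hS).symm
  have hupper : (ν.prod ρ) S ≤ K * μ (closedBall 0 (2 * R)) := by
    calc (ν.prod ρ) S = ∫⁻ y, ν ((fun t => (t, y)) ⁻¹' S) ∂ρ := Measure.prod_apply_symm hS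
      _ ≤ ∫⁻ _, K ∂ρ := lintegral_mono fun y => by
          rw [Measure.restrict_apply' measurableSet_Icc, inter_comm]
          exact hK y
      _ = K * μ (closedBall 0 (2 * R)) := by rw [lintegral_const, Measure.restrict_apply_univ]
  calc μ E = 2 * (2⁻¹ * μ E) := by
        rw [← mul_assoc, ENNReal.mul_inv_cancel two_ne_zero ENNReal.ofNat_ne_top, one_mul]
    _ ≤ 2 * (K * μ (closedBall 0 (2 * R))) :=
        mul_le_mul_right (hlower.trans hupper) 2

end Homothety

section Multivariate

open MvPolynomial

/-- The restriction of `P` to the line through `x` with direction `y`, as a polynomial in the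
parameter `t` of the point `x + t • y`. It reduces estimates for `P` to the univariate ones. -/
noncomputable def restrictLine {σ R : Type*} [CommSemiring R] (P : MvPolynomial σ R)
    (x y : σ → R) : Polynomial R :=
  aeval (fun i => Polynomial.C (y i) * Polynomial.X + Polynomial.C (x i)) P

section restrictLine

variable {σ R : Type*} [CommSemiring R] (P : MvPolynomial σ R) (x y : σ → R)

theorem eval_restrictLine (t : R) : (restrictLine P x y).eval t = eval (x + t • y) P := by
  have hcomp : (Polynomial.evalRingHom t).comp (algebraMap R (Polynomial R)) = RingHom.id R := by
    ext
    simp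
  have hpoint : (fun i => (Polynomial.C (y i) * Polynomial.X + Polynomial.C (x i)).eval t) =
      x + t • y := by
    ext i
    simp only [Polynomial.eval_add, Polynomial.eval_mul, Polynomial.eval_C, Polynomial.eval_X,
      Pi.add_apply, Pi.smul_apply, smul_eq_mul]
    ring
  rw [restrictLine, aeval_def, polynomial_eval_eval₂, hcomp, hpoint, eval₂_id]

theorem coeff_zero_restrictLine : (restrictLine P x y).coeff 0 = eval x P := by
  rw [Polynomial.coeff_zero_eq_eval_zero, eval_restrictLine, zero_smul, add_zero]

theorem natDegree_restrictLine_le : (restrictLine P x y).natDegree ≤ P.totalDegree := by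
  simpa [restrictLine] using aeval_natDegree_le P le_rfl _ fun i =>
    Polynomial.natDegree_linear_le (a := y i) (b := x i)

end restrictLine

theorem totalDegree_finSuccEquiv_coeff_le {R : Type*} [CommSemiring R] {n : ℕ}
    (P : MvPolynomial (Fin (n + 1)) R) (k : ℕ) :
    ((finSuccEquiv R n P).coeff k).totalDegree ≤ P.totalDegree := by
  by_cases h : (finSuccEquiv R n P).coeff k = 0
  · simp [h]
  · exact (Nat.le_add_right _ k).trans (totalDegree_coeff_finSuccEquiv_add_le P k h)

theorem exists_abs_coeff_le_coeffBound_pow_mul_abs_eval {n d : ℕ} {P : MvPolynomial (Fin n) ℝ}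
    (hP : P.totalDegree ≤ d) (I : Fin n →₀ ℕ) :
    ∃ x ∈ closedBall (0 : Fin n → ℝ) 1, |coeff I P| ≤ coeffBound d ^ n * |eval x P| := by
  induction n with
  | zero =>
    refine ⟨0, mem_closedBall_self zero_le_one, ?_⟩
    rw [eq_C_of_isEmpty P, eval_C, coeff_C, if_pos (Subsingleton.elim _ _), pow_zero, one_mul]
  | succ n ih =>
    let Q := finSuccEquiv ℝ n P
    have hB : 0 ≤ coeffBound d ^ n := (pow_pos (coeffBound_pos d) n).le
    obtain ⟨y, hy, hcoeff⟩ := ih ((totalDegree_finSuccEquiv_coeff_le P (I 0)).trans hP) I.tail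
    rw [finSuccEquiv_coeff_coeff, Finsupp.cons_tail] at hcoeff
    have hdeg : (Q.map (eval y)).natDegree ≤ d :=
      Polynomial.natDegree_map_le.trans <| (natDegree_finSuccEquiv P).trans_le
        ((degreeOf_le_totalDegree P 0).trans hP)
    obtain ⟨t, ht, heval⟩ := exists_abs_coeff_le_coeffBound_mul_abs_eval hdeg (I 0)
    rw [Polynomial.coeff_map, ← eval_eq_eval_mv_eval'] at heval
    refine ⟨Fin.cons t y, ?_, hcoeff.trans ?_⟩
    · rw [mem_closedBall_zero_iff, pi_norm_le_iff_of_nonneg zero_le_one] at hy ⊢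
      exact Fin.cases (abs_le.2 ht) hy
    · rw [pow_succ, mul_assoc]
      exact mul_le_mul_of_nonneg_left heval hB

theorem volume_sublevel_closedBall_le {σ : Type*} [Fintype σ] {P : MvPolynomial σ ℝ} {d : ℕ}
    (hP : P.totalDegree ≤ d) {s δ η : ℝ} (hs : 0 ≤ s) (hsd : s * d ≤ 1) (hδ : 0 < δ) (hη : 0 < η)
    {x : σ → ℝ} (hx : η ≤ |eval x P|) (R : ℝ) :
    volume {y : σ → ℝ | y ∈ closedBall x R ∧ |eval y P| ≤ δ} ≤
      2 * (ENNReal.ofReal (4 * (d + 1) * ((d + 2) * δ / η) ^ s) *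
        volume (closedBall (0 : σ → ℝ) (2 * R))) := by
  have hE : MeasurableSet {y : σ → ℝ | y ∈ closedBall x R ∧ |eval y P| ≤ δ} :=
    (isClosed_closedBall.inter
      (isClosed_le (continuous_eval P).abs continuous_const)).measurableSet
  refine measure_le_of_volume_line_le volume hE (fun y hy => hy.1) fun y => ?_
  have hcoeff : η ≤ |(restrictLine P x y).coeff 0| := by rwa [coeff_zero_restrictLine]
  refine le_trans (measure_mono ?_) (volume_sublevel_Icc_le
    ((natDegree_restrictLine_le P x y).trans hP) hs hsd hδ hη hcoeff)
  rintro t ⟨ht, -, hval⟩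
  exact ⟨⟨by linarith [ht.1], ht.2⟩, by rwa [eval_restrictLine]⟩

theorem volume_sublevel_unitBall_le {n d : ℕ} {P : MvPolynomial (Fin n) ℝ}
    (hP : P.totalDegree ≤ d) {s δ : ℝ} (hs : 0 ≤ s) (hsd : s * d ≤ 1) (hδ : 0 < δ)
    {I : Fin n →₀ ℕ} (hI : coeff I P ≠ 0) :
    volume {x : EuclideanSpace ℝ (Fin n) | ‖x‖ ≤ 1 ∧ |eval (fun j => x j) P| ≤ δ} ≤
      ENNReal.ofReal (8 ^ (n + 1) * (d + 1) * ((d + 2) * coeffBound d ^ n) ^ s *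
        (δ / |coeff I P|) ^ s) := by
  have hB : 0 < coeffBound d ^ n := pow_pos (coeffBound_pos d) n
  obtain ⟨x, hx, hcoeff⟩ := exists_abs_coeff_le_coeffBound_pow_mul_abs_eval hP I
  have hball : ∀ y : EuclideanSpace ℝ (Fin n), ‖y‖ ≤ 1 → y.ofLp ∈ closedBall x 2 := by
    intro y hy
    have hsup : ‖y.ofLp‖ ≤ 1 :=
      (pi_norm_le_iff_of_nonneg zero_le_one).2 fun i => (PiLp.norm_apply_le y i).trans hy
    rw [mem_closedBall_zero_iff] at hx
    rw [mem_closedBall, dist_eq_norm]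
    linarith [norm_sub_le y.ofLp x]
  calc volume {x : EuclideanSpace ℝ (Fin n) | ‖x‖ ≤ 1 ∧ |eval (fun j => x j) P| ≤ δ}
      ≤ volume (WithLp.ofLp ⁻¹' {y : Fin n → ℝ | y ∈ closedBall x 2 ∧ |eval y P| ≤ δ}) :=
        measure_mono fun y hy => ⟨hball y hy.1, hy.2⟩
    _ ≤ volume {y : Fin n → ℝ | y ∈ closedBall x 2 ∧ |eval y P| ≤ δ} :=
        (PiLp.volume_preserving_ofLp (Fin n)).measure_preimage_le _
    _ ≤ 2 * (ENNReal.ofReal (4 * (d + 1) *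
          ((d + 2) * δ / (|coeff I P| / coeffBound d ^ n)) ^ s) *
          volume (closedBall (0 : Fin n → ℝ) (2 * 2))) :=
        volume_sublevel_closedBall_le hP hs hsd hδ (by positivity)
          ((div_le_iff₀' hB).2 hcoeff) 2
    _ = ENNReal.ofReal (2 * (4 * (d + 1) *
          (((d + 2) * coeffBound d ^ n) * (δ / |coeff I P|)) ^ s * 8 ^ n)) := by
        rw [Real.volume_pi_closedBall _ (by norm_num), Fintype.card_fin,
          ← ENNReal.ofReal_mul (by positivity), ENNReal.ofReal_mul two_pos.le, ENNReal.ofReal_ofNat]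
        congr 5
        · field_simp
        · norm_num
    _ = ENNReal.ofReal (8 ^ (n + 1) * (d + 1) * ((d + 2) * coeffBound d ^ n) ^ s *
          (δ / |coeff I P|) ^ s) := by
        rw [Real.mul_rpow (by positivity) (by positivity)]
        congr 1
        ring

end Multivariate

theorem stmt1_general (n d : ℕ) {s : ℝ} (hs : 0 ≤ s) (hsd : s * d ≤ 1) :
    ∃ C : ℝ, ∀ P : MvPolynomial (Fin n) ℝ, P ≠ 0 → P.totalDegree ≤ d →
      ∀ M : ℝ, IsGreatest {r : ℝ | ∃ I : Fin n →₀ ℕ, r = |MvPolynomial.coeff I P|} M →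
      ∀ δ : ℝ, 0 < δ →
        volume
            {x : EuclideanSpace ℝ (Fin n) | ‖x‖ ≤ 1 ∧
              |MvPolynomial.eval (fun j => x j) P| ≤ δ}
          ≤ ENNReal.ofReal (C * (δ / M) ^ s) := by
  refine ⟨8 ^ (n + 1) * (d + 1) * ((d + 2) * coeffBound d ^ n) ^ s, fun P hP0 hP M hM δ hδ => ?_⟩
  obtain ⟨I, rfl⟩ := hM.1
  obtain ⟨J, hJ⟩ := MvPolynomial.ne_zero_iff.1 hP0
  have hI : MvPolynomial.coeff I P ≠ 0 := abs_pos.1 ((abs_pos.2 hJ).trans_le (hM.2 ⟨J, rfl⟩))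
  exact volume_sublevel_unitBall_le hP hs hsd hδ hI

/-- For all `n ≥ 1`, `d ≥ 1` there is `C(d,n)` such that: if
`P(x) = ∑_{|I| ≤ d} c_I x^I` is a nonzero real polynomial in `n` variables of total
degree at most `d`, and `M = max_I |c_I|`, then for every `δ > 0` the Lebesgue measure
of `{x : |x| ≤ 1, |P(x)| ≤ δ}` is at most `C(d,n) (δ/M)^{1/dⁿ}`. -/
theorem stmt1 (n d : ℕ) (hn : 1 ≤ n) (hd : 1 ≤ d) :
    ∃ C : ℝ, ∀ P : MvPolynomial (Fin n) ℝ, P ≠ 0 → P.totalDegree ≤ d →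
      ∀ M : ℝ, IsGreatest {r : ℝ | ∃ I : Fin n →₀ ℕ, r = |MvPolynomial.coeff I P|} M →
      ∀ δ : ℝ, 0 < δ →
        MeasureTheory.volume
            {x : EuclideanSpace ℝ (Fin n) | ‖x‖ ≤ 1 ∧
              |MvPolynomial.eval (fun j => x j) P| ≤ δ}
          ≤ ENNReal.ofReal (C * (δ / M) ^ ((1 : ℝ) / ((d : ℝ) ^ n))) := by
  exact stmt1_general n d (by positivity) <| (one_div_mul_eq_div _ _).trans_le <|
    div_le_one_of_le₀ (le_self_pow₀ (mod_cast hd) (Nat.one_le_iff_ne_zero.1 hn)) (by positivity)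
end

section
/- Let n ≥ 1 be an integer and let r_1, …, r_p be positive real numbers with Σ_{i=1}^p r_iⁿ ≤ 4^{−n}. Then there exist points p_1, …, p_p ∈ ℝⁿ such that the closed balls B(p_i, r_i) are pairwise disjoint and each ball B(p_i, r_i) is contained in the closed unit ball of ℝⁿ. -/
/-!
Place the balls greedily inside a ball of radius `R`, in decreasing order of radius. When a ball of
radius `t` is to be placed, every ball already there has radius `r j ≥ t`, and a center is bad only
if it lies in one of the closed balls of radius `t + r j ≤ 2 * r j` about the old centers. By the
hypothesis on the radii, those have total volume at most that of a ball of radius `R / 2`, whereas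
the new center may be anywhere in a ball of radius `R - t ≥ 3 * R / 4`, so a good one exists.
-/

open Metric MeasureTheory Module

section Packing

variable {E ι : Type*} [NormedAddCommGroup E] [NormedSpace ℝ E] [FiniteDimensional ℝ E]
  {s : Finset ι} {c : ι → E} {r : ι → ℝ} {x : E} {R t : ℝ}

lemma pow_finrank_le_sum_of_closedBall_subset_biUnion (hR : 0 ≤ R) (hr : ∀ j ∈ s, 0 ≤ r j)
    (hcover : closedBall x R ⊆ ⋃ j ∈ s, closedBall (c j) (r j)) :
    R ^ finrank ℝ E ≤ ∑ j ∈ s, r j ^ finrank ℝ E := by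
  borelize E
  let μ : Measure E := Measure.addHaar
  have hr_pow : ∀ j ∈ s, 0 ≤ r j ^ finrank ℝ E := fun j hj ↦ pow_nonneg (hr j hj) _
  have hvol : ENNReal.ofReal (R ^ finrank ℝ E) * μ (ball 0 1) ≤
      ENNReal.ofReal (∑ j ∈ s, r j ^ finrank ℝ E) * μ (ball 0 1) := calc
    _ = μ (closedBall x R) := (μ.addHaar_closedBall x hR).symm
    _ ≤ ∑ j ∈ s, μ (closedBall (c j) (r j)) :=
      (measure_mono hcover).trans (measure_biUnion_finset_le s _)
    _ = ∑ j ∈ s, ENNReal.ofReal (r j ^ finrank ℝ E) * μ (ball 0 1) :=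
      Finset.sum_congr rfl fun j hj ↦ μ.addHaar_closedBall (c j) (hr j hj)
    _ = _ := by rw [ENNReal.ofReal_sum_of_nonneg hr_pow, Finset.sum_mul]
  rwa [ENNReal.mul_le_mul_iff_left (measure_ball_pos μ 0 one_pos).ne' measure_ball_lt_top.ne,
    ENNReal.ofReal_le_ofReal_iff (Finset.sum_nonneg hr_pow)] at hvol

lemma exists_mem_closedBall_forall_lt_dist (hR : 0 ≤ R) (hr : ∀ j ∈ s, 0 ≤ r j)
    (hsum : ∑ j ∈ s, r j ^ finrank ℝ E < R ^ finrank ℝ E) (c : ι → E) (x : E) :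
    ∃ y ∈ closedBall x R, ∀ j ∈ s, r j < dist y (c j) := by
  by_contra! hcover
  exact hsum.not_ge <| pow_finrank_le_sum_of_closedBall_subset_biUnion (c := c) (x := x) hR hr
    fun y hy ↦ by simpa using hcover y hy

variable [Nontrivial E]

lemma exists_mem_closedBall_sub_forall_add_lt_dist (hR : 0 < R) (ht : 0 ≤ t) (htR : t ≤ R / 4)
    (htr : ∀ j ∈ s, t ≤ r j) (hsum : ∑ j ∈ s, r j ^ finrank ℝ E ≤ (R / 4) ^ finrank ℝ E)
    (c : ι → E) (x : E) :
    ∃ y ∈ closedBall x (R - t), ∀ j ∈ s, t + r j < dist y (c j) := by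
  have hnonneg : ∀ j ∈ s, 0 ≤ t + r j := fun j hj ↦ add_nonneg ht (ht.trans (htr j hj))
  refine exists_mem_closedBall_forall_lt_dist (by linarith) hnonneg ?_ c x
  calc ∑ j ∈ s, (t + r j) ^ finrank ℝ E
    _ ≤ ∑ j ∈ s, (2 * r j) ^ finrank ℝ E := Finset.sum_le_sum fun j hj ↦
      pow_le_pow_left₀ (hnonneg j hj) (by linarith [htr j hj]) _
    _ = 2 ^ finrank ℝ E * ∑ j ∈ s, r j ^ finrank ℝ E := by simp only [mul_pow, Finset.mul_sum]
    _ ≤ 2 ^ finrank ℝ E * (R / 4) ^ finrank ℝ E := by gcongr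
    _ = (R / 2) ^ finrank ℝ E := by rw [← mul_pow]; ring
    _ < (R - t) ^ finrank ℝ E :=
      pow_lt_pow_left₀ (by linarith) (by positivity) finrank_pos.ne'

lemma exists_pairwise_add_lt_dist_of_sum_pow_le (hR : 0 < R) (hr : ∀ i ∈ s, 0 ≤ r i)
    (hsum : ∑ i ∈ s, r i ^ finrank ℝ E ≤ (R / 4) ^ finrank ℝ E) (x : E) :
    ∃ c : ι → E, (s : Set ι).Pairwise (fun i j ↦ r i + r j < dist (c i) (c j)) ∧
      ∀ i ∈ s, c i ∈ closedBall x (R - r i) := by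
  classical
  induction s using Finset.induction_on_min_value r with
  | empty => exact ⟨fun _ ↦ x, by simp, by simp⟩
  | insert a s ha hmin ih =>
    rw [Finset.forall_mem_insert] at hr
    obtain ⟨hra, hrs⟩ := hr
    rw [Finset.sum_insert ha] at hsum
    have hsum_s : ∑ i ∈ s, r i ^ finrank ℝ E ≤ (R / 4) ^ finrank ℝ E := by
      linarith [pow_nonneg hra (finrank ℝ E)]
    have hraR : r a ≤ R / 4 := by
      refine le_of_pow_le_pow_left₀ (n := finrank ℝ E) finrank_pos.ne' (by positivity) ?_
      linarith [Finset.sum_nonneg fun i hi ↦ pow_nonneg (hrs i hi) (finrank ℝ E)]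
    obtain ⟨c, hc, hcR⟩ := ih hrs hsum_s
    obtain ⟨y, hyR, hy⟩ :=
      exists_mem_closedBall_sub_forall_add_lt_dist hR hra hraR hmin hsum_s c x
    have hupdate : ∀ i ∈ s, Function.update c a y i = c i := fun i hi ↦
      Function.update_of_ne (ne_of_mem_of_not_mem hi ha) y c
    refine ⟨Function.update c a y, ?_, ?_⟩
    · have : Std.Symm fun i j ↦ r i + r j <
          dist (Function.update c a y i) (Function.update c a y j) :=
        ⟨fun i j h ↦ by rwa [add_comm, dist_comm]⟩
      rw [Finset.coe_insert, Set.pairwise_insert_of_symm_of_notMem (by simpa using ha)]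
      refine ⟨fun i hi j hj hij ↦ ?_, fun j hj ↦ ?_⟩
      · simpa only [hupdate i hi, hupdate j hj] using hc hi hj hij
      · simpa only [Function.update_self, hupdate j hj] using hy j hj
    · rw [Finset.forall_mem_insert, Function.update_self]
      exact ⟨hyR, fun i hi ↦ hupdate i hi ▸ hcR i hi⟩

theorem stmt4_general [Fintype ι] (hR : 0 < R) (hr : ∀ i, 0 ≤ r i)
    (hsum : ∑ i, r i ^ finrank ℝ E ≤ (R / 4) ^ finrank ℝ E) (x : E) :
    ∃ c : ι → E,
      (∀ i j, i ≠ j → Disjoint (closedBall (c i) (r i)) (closedBall (c j) (r j))) ∧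
      ∀ i, closedBall (c i) (r i) ⊆ closedBall x R := by
  obtain ⟨c, hc, hcR⟩ := exists_pairwise_add_lt_dist_of_sum_pow_le hR (fun i _ ↦ hr i) hsum x
  refine ⟨c, fun i j hij ↦ closedBall_disjoint_closedBall (hc (by simp) (by simp) hij),
    fun i ↦ closedBall_subset_closedBall' ?_⟩
  linarith [mem_closedBall.1 (hcR i (Finset.mem_univ i))]

end Packing

/-- Let `n ≥ 1` and let `r 1, …, r p` be positive reals with
`∑ i, (r i)^n ≤ 4^{-n}`. Then there are points `c i` in `ℝⁿ` such that the closed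
balls `B(c i, r i)` are pairwise disjoint and each is contained in the closed unit ball. -/
theorem stmt4 (n : ℕ) (hn : 1 ≤ n) (p : ℕ) (r : Fin p → ℝ) (hr : ∀ i, 0 < r i)
    (hsum : ∑ i, (r i) ^ n ≤ (((4 : ℝ) ^ n)⁻¹)) :
    ∃ c : Fin p → EuclideanSpace ℝ (Fin n),
      (∀ i j, i ≠ j →
        Disjoint (Metric.closedBall (c i) (r i)) (Metric.closedBall (c j) (r j))) ∧
      (∀ i, Metric.closedBall (c i) (r i) ⊆
        Metric.closedBall (0 : EuclideanSpace ℝ (Fin n)) 1) := by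
  have : Nonempty (Fin n) := ⟨⟨0, hn⟩⟩
  exact stmt4_general one_pos (fun i ↦ (hr i).le) (by simpa using hsum) 0
end

section
/- There is a constant C(n) ≥ 1 depending only on n such that for every nonempty bounded open convex set A ⊆ ℝⁿ there exists a rectangle R with R ⊆ A ⊆ C(n)·R. Here a rectangle means the image of a product of closed intervals ∏_{i=1}^n [r_i, s_i] (with r_i < s_i for each i) under a rigid motion of ℝⁿ, and C(n)·R denotes the rectangle obtained by dilating R by the factor C(n) about its center. -/
/-!
Choose `p, q ∈ A` with `d = ‖q - p‖` at least half the diameter of `A`, put `e = d⁻¹ • (q - p)`, and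
let `P` be the orthogonal projection onto the hyperplane `(ℝ ∙ e)ᗮ`. By induction on the dimension
there is a box `B` with `B ⊆ P '' A ⊆ K • B`. Contract `B` towards `P p` by the factor `1/6` and
thicken it by `d/6` to either side of the height of the midpoint of `[p, q]`, where the height of
`x` is `⟪e, x⟫`. The heights of points of `A` lie between `-d` and `2 * d` above that of `p`, so
every point of the thickened box is a convex combination, with weights `1/6` and `5/6`, of a point
of `A` over `B` and a point of `[p, q]`. Conversely, dilating the thickened box by `11 * K` makes up
for the contraction and for the displacement of the centre of `B`.
-/

open Metric Module AffineMap Matrix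
open scoped RealInnerProductSpace

theorem exists_diam_lt_mul_dist {X : Type*} [PseudoMetricSpace X] {A : Set X} {k : ℝ} (hk : 1 < k)
    (hA : 0 < diam A) : ∃ p ∈ A, ∃ q ∈ A, diam A < k * dist p q := by
  by_contra! h
  have hle : diam A ≤ diam A / k :=
    diam_le_of_forall_dist_le (by positivity) fun p hp q hq =>
      (le_div_iff₀' (by positivity)).2 (h p hp q hq)
  exact (div_lt_self hA hk).not_ge hle

section OrientedBox

variable {ι E : Type*} [NormedAddCommGroup E] [InnerProductSpace ℝ E]

/-- The box with centre `c` whose axes are the vectors `b i` and whose half-widths are the numbers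
`l i`. When `b` is an orthonormal basis this is a rectangle, and scaling `l` dilates it about its
centre. -/
def orientedBox (b : ι → E) (c : E) (l : ι → ℝ) : Set E :=
  {x | ∀ i, |⟪b i, x - c⟫| ≤ l i}

namespace orientedBox

theorem image_homothety (b : ι → E) (p c : E) (l : ι → ℝ) {r : ℝ} (hr : 0 < r) :
    homothety p r '' orientedBox b c l = orientedBox b (homothety p r c) (r • l) := by
  have hmem (y : E) :
      homothety p r y ∈ orientedBox b (homothety p r c) (r • l) ↔ y ∈ orientedBox b c l := by
    have hsub : homothety p r y - homothety p r c = r • (y - c) := by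
      simp only [homothety_apply, vsub_eq_sub, vadd_eq_add]
      module
    simp only [orientedBox, Set.mem_ofPred_eq, hsub, inner_smul_right, abs_mul, abs_of_pos hr,
      Pi.smul_apply, smul_eq_mul, mul_le_mul_iff_right₀ hr]
  ext x
  refine ⟨?_, fun hx => ?_⟩
  · rintro ⟨y, hy, rfl⟩
    exact (hmem y).2 hy
  · have hinv : homothety p r (homothety p r⁻¹ x) = x :=
      (homothety_eq_iff_of_mul_eq_one (inv_mul_cancel₀ hr.ne')).1 rfl
    exact ⟨homothety p r⁻¹ x, (hmem _).1 (by rwa [hinv]), hinv⟩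

theorem mem_homothety_center_of_mem {b : ι → E} {c p x : E} {l : ι → ℝ} {r : ℝ} (hr : r ≤ 1)
    (hp : p ∈ orientedBox b c l) (hx : x ∈ orientedBox b c l) :
    x ∈ orientedBox b (homothety p r c) ((2 - r) • l) := fun i => by
  have hsub : x - homothety p r c = (x - c) - (1 - r) • (p - c) := by
    simp only [homothety_apply, vsub_eq_sub, vadd_eq_add]
    module
  calc |⟪b i, x - homothety p r c⟫| = |⟪b i, x - c⟫ - (1 - r) * ⟪b i, p - c⟫| := by
        rw [hsub, inner_sub_right, inner_smul_right]
    _ ≤ |⟪b i, x - c⟫| + (1 - r) * |⟪b i, p - c⟫| := by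
        simpa only [abs_mul, abs_of_nonneg (sub_nonneg.2 hr)] using
          abs_sub ⟪b i, x - c⟫ ((1 - r) * ⟪b i, p - c⟫)
    _ ≤ l i + (1 - r) * l i :=
        add_le_add (hx i) (mul_le_mul_of_nonneg_left (hp i) (sub_nonneg.2 hr))
    _ = ((2 - r) • l) i := by simp only [Pi.smul_apply, smul_eq_mul]; ring

theorem eq_image_repr_symm [Fintype ι] (b : OrthonormalBasis ι ℝ E) (c : E) (l : ι → ℝ) :
    orientedBox b c l = b.repr.symm ''
      {x | ∀ i, x i ∈ Set.Icc (⟪b i, c⟫ - l i) (⟪b i, c⟫ + l i)} := by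
  ext x
  rw [LinearIsometryEquiv.image_eq_preimage_symm]
  simp [orientedBox, inner_sub_right, abs_le, b.repr_apply_apply, add_comm]

end orientedBox

section Split

variable {e : E} {n : ℕ} {b : Fin n → (ℝ ∙ e)ᗮ} {c : (ℝ ∙ e)ᗮ} {l : Fin n → ℝ} {A : Set E}
  {p z : E} {d K : ℝ}

local notation "P" => Submodule.orthogonalProjectionOnto (ℝ ∙ e)ᗮ

theorem mem_orientedBox_vecCons_iff {x : E} :
    x ∈ orientedBox (vecCons e fun i => (b i : E)) z (vecCons d l) ↔
      |⟪e, x - z⟫| ≤ d ∧ P x ∈ orientedBox b (P z) l := by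
  simp only [orientedBox, Set.mem_ofPred_eq, Fin.forall_fin_succ, cons_val_zero, cons_val_succ,
    ← map_sub, Submodule.inner_orthogonalProjectionOnto_eq_of_mem_left]

theorem exists_inner_eq_and_projection_eq (he : ‖e‖ = 1) (h : ℝ) (w : (ℝ ∙ e)ᗮ) :
    ∃ z : E, ⟪e, z⟫ = h ∧ P z = w := by
  refine ⟨w + h • e, ?_, ?_⟩
  · rw [inner_add_right, inner_smul_right, real_inner_self_eq_norm_sq, he,
      Submodule.mem_orthogonal_singleton_iff_inner_right.1 w.2]
    ring
  · rw [map_add, map_smul, Submodule.orthogonalProjectionOnto_mem_subspace_eq_self,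
      Submodule.orthogonalProjectionOnto_orthogonal_apply_eq_zero
        (Submodule.mem_span_singleton_self e), smul_zero, add_zero]

theorem eq_add_inner_smul_of_projection_eq (he : ‖e‖ = 1) {x y : E} (h : P x = P y) :
    x = y + ⟪e, x - y⟫ • e := by
  have hxy : P (x - y) = 0 := by rw [map_sub, h, sub_self]
  have hsplit := Submodule.starProjection_add_starProjection_orthogonal (K := ℝ ∙ e) (x - y)
  rw [Submodule.starProjection_unit_singleton ℝ he, Submodule.starProjection_apply, hxy,
    Submodule.coe_zero, add_zero] at hsplit
  rw [hsplit, add_sub_cancel]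

theorem mem_of_projection_eq_homothety (he : ‖e‖ = 1) (hA : Convex ℝ A) (hp : p ∈ A) (hd : 0 < d)
    (hq : p + d • e ∈ A) {x y : E} (hy : y ∈ A) {r : ℝ} (hr₀ : 0 ≤ r) (hr₁ : r < 1)
    (hxe : ⟪e, x - p⟫ - r * ⟪e, y - p⟫ ∈ Set.Icc 0 ((1 - r) * d))
    (hx : P x = homothety (P p) r (P y)) : x ∈ A := by
  have hr : 0 < 1 - r := sub_pos.2 hr₁
  have hP : P x = P (homothety p r y) := by
    simp only [hx, homothety_apply, vsub_eq_sub, vadd_eq_add, map_add, map_smul, map_sub]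
  have hinner : ⟪e, x - homothety p r y⟫ = ⟪e, x - p⟫ - r * ⟪e, y - p⟫ := by
    rw [homothety_apply, vsub_eq_sub, vadd_eq_add, sub_add_eq_sub_sub_swap, inner_sub_right,
      inner_smul_right]
  obtain ⟨t, ht, hte⟩ : ∃ t ∈ Set.Icc (0 : ℝ) 1,
      (1 - r) * t * d = ⟪e, x - p⟫ - r * ⟪e, y - p⟫ :=
    ⟨(⟪e, x - p⟫ - r * ⟪e, y - p⟫) / ((1 - r) * d),
      ⟨div_nonneg hxe.1 (by positivity), (div_le_one (by positivity)).2 hxe.2⟩, by field_simp⟩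
  have hxm : x = r • y + (1 - r) • (p + t • d • e) := by
    rw [eq_add_inner_smul_of_projection_eq he hP, hinner, ← hte, homothety_apply, vsub_eq_sub,
      vadd_eq_add]
    module
  rw [hxm]
  exact hA hy (hA.add_smul_mem hp hq ht) hr₀ hr.le (add_sub_cancel _ _)

theorem orientedBox_vecCons_subset (he : ‖e‖ = 1) (hA : Convex ℝ A) (hp : p ∈ A) (hd : 0 < d)
    (hq : p + d • e ∈ A) (hAe : ∀ y ∈ A, ⟪e, y - p⟫ ∈ Set.Icc (-d) (2 * d))
    (hze : ⟪e, z - p⟫ = d / 2) (hz : P z = homothety (P p) (6⁻¹ : ℝ) c)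
    (hin : orientedBox b c l ⊆ P '' A) :
    orientedBox (vecCons e fun i => (b i : E)) z ((6⁻¹ : ℝ) • vecCons d l) ⊆ A := fun x hx => by
  rw [smul_cons, smul_eq_mul] at hx
  obtain ⟨hxe, hxP⟩ := mem_orientedBox_vecCons_iff.1 hx
  rw [hz, ← orientedBox.image_homothety b _ _ _ (by norm_num)] at hxP
  obtain ⟨_, hw, hwx⟩ := hxP
  obtain ⟨y, hy, rfl⟩ := hin hw
  have hxp : ⟪e, x - p⟫ = ⟪e, x - z⟫ + d / 2 := by
    rw [← hze, ← inner_add_right, sub_add_sub_cancel]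
  obtain ⟨hy₁, hy₂⟩ := hAe y hy
  rw [abs_le] at hxe
  refine mem_of_projection_eq_homothety he hA hp hd hq hy (by norm_num) (by norm_num) ?_ hwx.symm
  constructor <;> linarith

theorem subset_orientedBox_vecCons (hp : p ∈ A) (hd : 0 ≤ d)
    (hAe : ∀ y ∈ A, ⟪e, y - p⟫ ∈ Set.Icc (-d) (2 * d))
    (hze : ⟪e, z - p⟫ = d / 2) (hz : P z = homothety (P p) (6⁻¹ : ℝ) c) (hK : 1 ≤ K)
    (hout : P '' A ⊆ orientedBox b c (K • l)) :
    A ⊆ orientedBox (vecCons e fun i => (b i : E)) z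
      ((11 * K) • (6⁻¹ : ℝ) • vecCons d l) := fun x hx => by
  rw [smul_cons, smul_cons, mem_orientedBox_vecCons_iff]
  constructor
  · have hxz : ⟪e, x - z⟫ = ⟪e, x - p⟫ - d / 2 := by
      rw [← hze, ← inner_sub_right, sub_sub_sub_cancel_right]
    obtain ⟨h₁, h₂⟩ := hAe x hx
    have hdK : d ≤ K * d := le_mul_of_one_le_left hd hK
    rw [hxz, abs_le, smul_eq_mul, smul_eq_mul]
    constructor <;> linarith
  · have hscale : (2 - 6⁻¹ : ℝ) • K • l = (11 * K) • (6⁻¹ : ℝ) • l := by module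
    rw [hz, ← hscale]
    exact orientedBox.mem_homothety_center_of_mem (by norm_num)
      (hout ⟨p, hp, rfl⟩) (hout ⟨x, hx, rfl⟩)

end Split

theorem exists_unit_inner_mem_Icc [Nontrivial E] {A : Set E} (hb : Bornology.IsBounded A)
    (hi : (interior A).Nonempty) :
    ∃ p ∈ A, ∃ (e : E) (d : ℝ), ‖e‖ = 1 ∧ 0 < d ∧ p + d • e ∈ A ∧
      ∀ x ∈ A, ⟪e, x - p⟫ ∈ Set.Icc (-d) (2 * d) := by
  obtain ⟨a, ha⟩ := hi
  have hdiam : 0 < diam A :=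
    diam_pos (infinite_of_mem_nhds a (mem_interior_iff_mem_nhds.1 ha)).nontrivial hb
  obtain ⟨p, hp, q, hq, hpq⟩ := exists_diam_lt_mul_dist one_lt_two hdiam
  set d := ‖q - p‖ with hd_def
  rw [dist_comm, dist_eq_norm, ← hd_def] at hpq
  have hd : 0 < d := by linarith
  have hqe : p + d • d⁻¹ • (q - p) = q := by rw [smul_inv_smul₀ hd.ne', add_sub_cancel]
  generalize he_def : d⁻¹ • (q - p) = e at hqe
  have he : ‖e‖ = 1 := by rw [← he_def, norm_smul, norm_inv, norm_norm, inv_mul_cancel₀ hd.ne']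
  have hwidth {x y : E} (hx : x ∈ A) (hy : y ∈ A) : ⟪e, x - y⟫ ≤ 2 * d :=
    calc ⟪e, x - y⟫ ≤ ‖e‖ * ‖x - y‖ := real_inner_le_norm _ _
      _ = dist x y := by rw [he, one_mul, dist_eq_norm]
      _ ≤ 2 * d := (dist_le_diam_of_mem hb hx hy).trans hpq.le
  refine ⟨p, hp, e, d, he, hd, hqe.symm ▸ hq, fun x hx => ⟨?_, hwidth hx hp⟩⟩
  have hqx : ⟪e, q - x⟫ = d - ⟪e, x - p⟫ := by
    rw [← hqe, add_sub_right_comm, inner_add_right, inner_smul_right, real_inner_self_eq_norm_sq,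
      he, ← neg_sub, inner_neg_right]
    ring
  linarith [hwidth hq hx]

section Approximation

variable [FiniteDimensional ℝ E] {n : ℕ} {A : Set E}

theorem exists_orientedBox_subset_subset (hn : finrank ℝ E = n) (hA : Convex ℝ A)
    (hb : Bornology.IsBounded A) (hi : (interior A).Nonempty) :
    ∃ (b : Fin n → E) (c : E) (l : Fin n → ℝ), Orthonormal ℝ b ∧ (∀ i, 0 < l i) ∧
      orientedBox b c l ⊆ A ∧ A ⊆ orientedBox b c ((11 : ℝ) ^ n • l) := by
  induction n generalizing E with
  | zero =>
    have : Subsingleton E := finrank_zero_iff.1 hn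
    obtain ⟨a, ha⟩ := hi.mono interior_subset
    exact ⟨Fin.elim0, a, Fin.elim0, ⟨fun i => i.elim0, fun i => i.elim0⟩, fun i => i.elim0,
      fun x _ => Subsingleton.elim a x ▸ ha, fun _ _ i => i.elim0⟩
  | succ n ih =>
    have : Nontrivial E := nontrivial_of_finrank_eq_succ hn
    obtain ⟨p, hp, e, d, he, hd, hq, hAe⟩ := exists_unit_inner_mem_Icc hb hi
    have : Fact (finrank ℝ E = n + 1) := ⟨hn⟩
    have hrank : finrank ℝ (ℝ ∙ e)ᗮ = n :=
      Submodule.finrank_orthogonal_span_singleton (norm_ne_zero_iff.1 (he ▸ one_ne_zero))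
    let P := (ℝ ∙ e)ᗮ.orthogonalProjectionOnto
    have hPopen : IsOpenMap P :=
      P.isOpenMap fun w => ⟨w, Submodule.orthogonalProjectionOnto_mem_subspace_eq_self w⟩
    obtain ⟨b, c, l, hb', hl, hin, hout⟩ := ih hrank (hA.linear_image P.toLinearMap)
      (P.lipschitz.isBounded_image hb) ((hi.image P).mono (hPopen.image_interior_subset A))
    obtain ⟨z, hze, hz⟩ := exists_inner_eq_and_projection_eq he (⟪e, p⟫ + d / 2)
      (homothety (P p) (6⁻¹ : ℝ) c)
    have hzp : ⟪e, z - p⟫ = d / 2 := by rw [inner_sub_right, hze, add_sub_cancel_left]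
    have hbE : Orthonormal ℝ fun i => (b i : E) :=
      hb'.comp_linearIsometry (ℝ ∙ e)ᗮ.subtypeₗᵢ
    have heb (i : Fin n) : ⟪e, b i⟫ = 0 :=
      Submodule.mem_orthogonal_singleton_iff_inner_right.1 (b i).2
    have hl' (i : Fin (n + 1)) : 0 < vecCons d l i := Fin.cases hd hl i
    refine ⟨vecCons e fun i => (b i : E), z, (6⁻¹ : ℝ) • vecCons d l,
      orthonormal_vecCons_iff.2 ⟨he, heb, hbE⟩, fun i => mul_pos (by norm_num) (hl' i),
      orientedBox_vecCons_subset he hA hp hd hq hAe hzp hz hin, ?_⟩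
    rw [pow_succ']
    exact subset_orientedBox_vecCons hp hd.le hAe hzp hz (one_le_pow₀ (by norm_num)) hout

theorem stmt9_general (hn : finrank ℝ E = n) (hA : Convex ℝ A) (hb : Bornology.IsBounded A)
    (hi : (interior A).Nonempty) :
    ∃ (f : EuclideanSpace ℝ (Fin n) ≃ᵢ E) (r s : Fin n → ℝ),
      (∀ i, r i < s i) ∧
      f '' {x | ∀ i, x i ∈ Set.Icc (r i) (s i)} ⊆ A ∧
      A ⊆ f '' {x | ∀ i,
        x i ∈ Set.Icc ((r i + s i) / 2 - 11 ^ n * (s i - r i) / 2)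
          ((r i + s i) / 2 + 11 ^ n * (s i - r i) / 2)} := by
  obtain ⟨v, c, l, hv, hl, hin, hout⟩ := exists_orientedBox_subset_subset hn hA hb hi
  have hspan : Submodule.span ℝ (Set.range v) = ⊤ :=
    hv.linearIndependent.span_eq_top_of_card_eq_finrank' (by simp [hn])
  obtain ⟨b, rfl⟩ : ∃ b : OrthonormalBasis (Fin n) ℝ E, ⇑b = v :=
    ⟨OrthonormalBasis.mk hv hspan.ge, OrthonormalBasis.coe_mk hv hspan.ge⟩
  rw [orientedBox.eq_image_repr_symm] at hin hout
  have hmid (i : Fin n) : (⟪b i, c⟫ - l i + (⟪b i, c⟫ + l i)) / 2 = ⟪b i, c⟫ := by ring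
  have hwidth (i : Fin n) :
      11 ^ n * (⟪b i, c⟫ + l i - (⟪b i, c⟫ - l i)) / 2 = 11 ^ n * l i := by ring
  refine ⟨b.repr.symm.toIsometryEquiv, fun i => ⟪b i, c⟫ - l i, fun i => ⟪b i, c⟫ + l i,
    fun i => by linarith [hl i], hin, ?_⟩
  simpa only [hmid, hwidth, Pi.smul_apply, smul_eq_mul, LinearIsometryEquiv.coe_toIsometryEquiv]
    using hout

end Approximation

end OrientedBox

/-- **Lemma 4.4.** There is `C(n) ≥ 1` such that every nonempty bounded
open convex set `A ⊆ ℝⁿ` contains a rectangle `R` (an isometric image of a product of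
closed intervals) with `R ⊆ A ⊆ C(n)·R`, where `C(n)·R` is the dilate of `R` by the
factor `C(n)` about its center. -/
theorem stmt9 (n : ℕ) (hn : 1 ≤ n) :
    ∃ C : ℝ, 1 ≤ C ∧ ∀ A : Set (EuclideanSpace ℝ (Fin n)),
      A.Nonempty → Bornology.IsBounded A → IsOpen A → Convex ℝ A →
      ∃ (f : EuclideanSpace ℝ (Fin n) ≃ᵢ EuclideanSpace ℝ (Fin n)) (r s : Fin n → ℝ),
        (∀ i, r i < s i) ∧
        f '' {x : EuclideanSpace ℝ (Fin n) | ∀ i, x i ∈ Set.Icc (r i) (s i)} ⊆ A ∧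
        A ⊆ f '' {x : EuclideanSpace ℝ (Fin n) | ∀ i,
          x i ∈ Set.Icc ((r i + s i) / 2 - C * (s i - r i) / 2)
            ((r i + s i) / 2 + C * (s i - r i) / 2)} := by
  exact ⟨11 ^ n, one_le_pow₀ (by norm_num), fun A hne hb ho hA =>
    stmt9_general finrank_euclideanSpace_fin hA hb (ho.interior_eq.symm ▸ hne)⟩
end

section
/- Let X be a topological space, let i ≥ 0 be an integer, and let V be an open subset of S^i × X. Then P[V] is an open subset of X. -/
/-- The sphere `S^i`, realized as the unit sphere in `ℝ^{i+1}`. -/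
abbrev Sph (i : ℕ) := Metric.sphere (0 : EuclideanSpace ℝ (Fin (i + 1))) 1

/-- For `V ⊆ S^i × X`, `Pset i V = ⋂_{θ ∈ S^i} (V(θ) ∪ V(-θ))`, where
`V(θ) = {x : (θ, x) ∈ V}`. -/
def Pset {X : Type*} (i : ℕ) (V : Set (Sph i × X)) : Set X :=
  ⋂ θ : Sph i, ({x | (θ, x) ∈ V} ∪ {x | (-θ, x) ∈ V})

/-!
The union of `V` and its preimage under the antipodal map is open in `S^i × X`, and `P[V]` consists
of the points over which this union contains the whole fibre. Its complement is thus the projection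
to `X` of a closed set, and projecting along the compact factor `S^i` is a closed map.
-/

theorem kernImage_snd_eq_iInter {Θ X : Type*} (W : Set (Θ × X)) :
    Set.kernImage Prod.snd W = ⋂ θ, {x | (θ, x) ∈ W} := by
  ext x
  simp [Set.kernImage]

section CompactSpace

variable {Θ X : Type*} [TopologicalSpace Θ] [CompactSpace Θ] [TopologicalSpace X]

theorem isOpen_iInter_setOf_prodMk_mem {W : Set (Θ × X)} (hW : IsOpen W) :
    IsOpen (⋂ θ, {x | (θ, x) ∈ W}) := by
  rw [← kernImage_snd_eq_iInter]
  exact isClosedMap_iff_kernImage.mp isClosedMap_snd_of_compactSpace hW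

theorem stmt10_general {σ : Θ → Θ} (hσ : Continuous σ) {V : Set (Θ × X)} (hV : IsOpen V) :
    IsOpen (⋂ θ, ({x | (θ, x) ∈ V} ∪ {x | (σ θ, x) ∈ V})) := by
  have hσV : IsOpen (Prod.map σ id ⁻¹' V) := hV.preimage (hσ.prodMap continuous_id)
  exact isOpen_iInter_setOf_prodMk_mem (hV.union hσV)

end CompactSpace

/-- If `V` is an open subset of `S^i × X`, then `P[V]` is open in `X`. -/
theorem stmt10 (X : Type*) [TopologicalSpace X] (i : ℕ)
    (V : Set (Sph i × X)) (hV : IsOpen V) : IsOpen (Pset i V) :=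
  stmt10_general continuous_neg hV
end

section
/- Let X be a topological space, let i ≥ 0 be an integer, and let V be an open subset of S^i × X. Suppose K_1 ⊆ K_2 ⊆ ⋯ are compact subsets of S^i × X with K_j contained in the interior of K_{j+1} for every j and with ⋃_{j=1}^∞ K_j = V. Then P[V] = ⋃_{j=1}^∞ P[K_j]. -/
/-! For fixed `x`, membership in `P[⋃ j, U j]` says that open conditions on `θ`, increasing in `j`,
cover the compact sphere, so a single `j` works for all `θ`. The interiors of the `K j` are such a
family, and they have the same union as the `K j` themselves. -/

section KernImage

variable {ι X Y : Type*} [TopologicalSpace Y] {f : Y → X} {K U : ι → Set Y}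

theorem iUnion_interior_eq_iUnion (hK : ∀ j, ∃ k, K j ⊆ interior (K k)) :
    ⋃ j, interior (K j) = ⋃ j, K j :=
  (Set.iUnion_mono fun _ => interior_subset).antisymm (Set.iUnion_mono' hK)

theorem kernImage_iUnion_of_isOpen [Nonempty ι] (hf : ∀ x, IsCompact (f ⁻¹' {x}))
    (hU : ∀ j, IsOpen (U j)) (hdir : Directed (· ⊆ ·) U) :
    Set.kernImage f (⋃ j, U j) = ⋃ j, Set.kernImage f (U j) := by
  refine Set.Subset.antisymm (fun x hx => ?_)
    (Set.iUnion_subset fun j => Set.kernImage_mono (Set.subset_iUnion U j))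
  have hcover : f ⁻¹' {x} ⊆ ⋃ j, U j := fun _ hy => hx hy
  obtain ⟨j, hj⟩ := (hf x).elim_directed_cover U hU hcover hdir
  exact Set.mem_iUnion.2 ⟨j, fun _ hy => hj hy⟩

theorem kernImage_iUnion_of_subset_interior [Nonempty ι] (hf : ∀ x, IsCompact (f ⁻¹' {x}))
    (hdir : Directed (· ⊆ ·) K) (hK : ∀ j, ∃ k, K j ⊆ interior (K k)) :
    Set.kernImage f (⋃ j, K j) = ⋃ j, Set.kernImage f (K j) := by
  refine Set.Subset.antisymm ?_
    (Set.iUnion_subset fun j => Set.kernImage_mono (Set.subset_iUnion K j))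
  calc Set.kernImage f (⋃ j, K j)
      = Set.kernImage f (⋃ j, interior (K j)) := by rw [iUnion_interior_eq_iUnion hK]
    _ = ⋃ j, Set.kernImage f (interior (K j)) :=
        kernImage_iUnion_of_isOpen hf (fun _ => isOpen_interior)
          (hdir.mono_comp (g := interior) (· ⊆ ·) fun _ _ => interior_mono)
    _ ⊆ ⋃ j, Set.kernImage f (K j) :=
        Set.iUnion_mono fun _ => Set.kernImage_mono interior_subset

end KernImage

section AntipodalCore

variable {ι Θ X : Type*} [Neg Θ]

/-- The set `V ∪ {(θ, x) | (-θ, x) ∈ V}`, whose slice at `θ` is `V(θ) ∪ V(-θ)`. -/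
def antipodalUnion (V : Set (Θ × X)) : Set (Θ × X) :=
  V ∪ Prod.map Neg.neg id ⁻¹' V

/-- The set `P[V] = ⋂ θ, V(θ) ∪ V(-θ)`, with the sphere replaced by any type `Θ` carrying a
negation; `Pset i` is the case `Θ = S^i`. -/
def antipodalCore (V : Set (Θ × X)) : Set X :=
  ⋂ θ, ({x | (θ, x) ∈ V} ∪ {x | (-θ, x) ∈ V})

theorem antipodalCore_eq_kernImage (V : Set (Θ × X)) :
    antipodalCore V = Set.kernImage Prod.snd (antipodalUnion V) := by
  ext x
  simp [antipodalCore, antipodalUnion, Set.kernImage]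

theorem antipodalUnion_mono : Monotone (antipodalUnion : Set (Θ × X) → Set (Θ × X)) :=
  fun _ _ h => Set.union_subset_union h (Set.preimage_mono h)

theorem antipodalUnion_iUnion (K : ι → Set (Θ × X)) :
    antipodalUnion (⋃ j, K j) = ⋃ j, antipodalUnion (K j) := by
  simp only [antipodalUnion, Set.preimage_iUnion, Set.iUnion_union_distrib]

variable [TopologicalSpace Θ] [ContinuousNeg Θ] [TopologicalSpace X]

theorem antipodalUnion_interior_subset (V : Set (Θ × X)) :
    antipodalUnion (interior V) ⊆ interior (antipodalUnion V) :=
  interior_maximal (antipodalUnion_mono interior_subset)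
    (isOpen_interior.union (isOpen_interior.preimage (continuous_neg.prodMap continuous_id)))

theorem stmt11_general [CompactSpace Θ] [Nonempty ι] {K : ι → Set (Θ × X)}
    (hdir : Directed (· ⊆ ·) K) (hK : ∀ j, ∃ k, K j ⊆ interior (K k)) :
    antipodalCore (⋃ j, K j) = ⋃ j, antipodalCore (K j) := by
  have hfiber (x : X) : IsCompact (Prod.snd ⁻¹' {x} : Set (Θ × X)) :=
    isProperMap_snd_of_compactSpace.isCompact_preimage isCompact_singleton
  have hinterior (j : ι) : ∃ k, antipodalUnion (K j) ⊆ interior (antipodalUnion (K k)) :=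
    (hK j).imp fun _ hk => (antipodalUnion_mono hk).trans (antipodalUnion_interior_subset _)
  simp only [antipodalCore_eq_kernImage, antipodalUnion_iUnion]
  exact kernImage_iUnion_of_subset_interior hfiber (hdir.mono_comp _ antipodalUnion_mono) hinterior

end AntipodalCore

/-- If `V ⊆ S^i × X` is open and `K 1 ⊆ K 2 ⊆ ⋯` is an exhaustion of
`V` by compact sets, each contained in the interior of the next, then
`P[V] = ⋃ j, P[K j]`. -/
theorem stmt11 (X : Type*) [TopologicalSpace X] (i : ℕ)
    (V : Set (Sph i × X)) (hV : IsOpen V)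
    (K : ℕ → Set (Sph i × X)) (hK : ∀ j, IsCompact (K j))
    (hmono : ∀ j, K j ⊆ interior (K (j + 1)))
    (hunion : ⋃ j, K j = V) :
    Pset i V = ⋃ j, Pset i (K j) := by
  have hK_mono : Monotone K := monotone_nat_of_le_succ fun j => (hmono j).trans interior_subset
  exact hunion ▸ stmt11_general hK_mono.directed_le fun j => ⟨j + 1, hmono j⟩
end

section
/- Let d ≥ 1 be an integer and let t_1, …, t_d be real numbers in [0,1]. Then there exists an integer k with 0 ≤ k ≤ d such that exactly k of the indices i ∈ {1,…,d} satisfy t_i > 1/(k+2) and the remaining d−k indices satisfy t_i < 1/(k+2). -/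
/-!
Take the least `k` such that at most `k` indices satisfy `c k ≤ t i`, where `c` is the strictly
decreasing sequence of thresholds. If `k = m + 1`, minimality gives at least `k` indices with
`c m ≤ t i`, and all of them satisfy `c k < t i`. So `k` or more indices lie strictly above `c k`
while at most `k` lie weakly above it: the two sets agree, and no `t i` equals `c k`.
-/

open scoped Finset

theorem exists_eq_self_of_interlacing {f g : ℕ → ℕ} (hgf : ∀ k, g k ≤ f k)
    (hfg : ∀ k, f k ≤ g (k + 1)) (hf : ∃ n, f n ≤ n) : ∃ k, g k = k ∧ f k = k := by
  obtain ⟨k, hk, hmin⟩ : ∃ k, f k ≤ k ∧ ∀ m < k, m < f m :=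
    ⟨Nat.find hf, Nat.find_spec hf, fun _ hm ↦ not_le.mp (Nat.find_min hf hm)⟩
  have le_g : k ≤ g k := by
    cases k with
    | zero => exact Nat.zero_le _
    | succ m => exact (hmin m m.lt_succ_self).trans_le (hfg m)
  exact ⟨k, le_antisymm ((hgf k).trans hk) le_g, le_antisymm hk (le_g.trans (hgf k))⟩

theorem exists_eq_and_card_eq_self_of_interlacing {ι : Type*} {F G : ℕ → Finset ι}
    (hGF : ∀ k, G k ⊆ F k) (hFG : ∀ k, F k ⊆ G (k + 1)) (hF : ∃ n, #(F n) ≤ n) :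
    ∃ k, G k = F k ∧ #(G k) = k := by
  obtain ⟨k, hG, hF⟩ := exists_eq_self_of_interlacing (fun k ↦ Finset.card_le_card (hGF k))
    (fun k ↦ Finset.card_le_card (hFG k)) hF
  exact ⟨k, Finset.eq_of_subset_of_card_le (hGF k) (hF.trans hG.symm).le, hG⟩

theorem strictAnti_one_div_natCast_add {K : Type*} [Field K] [LinearOrder K]
    [IsStrictOrderedRing K] {a : K} (ha : 0 < a) : StrictAnti fun k : ℕ ↦ 1 / ((k : K) + a) :=
  fun _ _ h ↦ one_div_lt_one_div_of_lt (by positivity) (by gcongr)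

theorem stmt12_general {ι α : Type*} [Finite ι] [LinearOrder α] {c : ℕ → α} (hc : StrictAnti c)
    (t : ι → α) : ∃ A : Finset ι, (∀ i ∈ A, c #A < t i) ∧ ∀ i ∉ A, t i < c #A := by
  cases nonempty_fintype ι
  let above (k : ℕ) : Finset ι := {i | c k < t i}
  let weaklyAbove (k : ℕ) : Finset ι := {i | c k ≤ t i}
  have above_subset (k : ℕ) : above k ⊆ weaklyAbove k :=
    Finset.monotone_filter_right _ fun _ _ ↦ le_of_lt
  have weaklyAbove_subset (k : ℕ) : weaklyAbove k ⊆ above (k + 1) :=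
    Finset.monotone_filter_right _ fun _ _ ↦ (hc k.lt_succ_self).trans_le
  obtain ⟨k, above_eq, card_above⟩ := exists_eq_and_card_eq_self_of_interlacing
    above_subset weaklyAbove_subset ⟨Fintype.card ι, Finset.card_le_univ _⟩
  refine ⟨above k, fun i hi ↦ ?_, fun i hi ↦ ?_⟩ <;> rw [card_above]
  · simpa only [above, Finset.mem_filter_univ] using hi
  · simpa only [above_eq, weaklyAbove, Finset.mem_filter_univ, not_le] using hi

/-- For `t 1, …, t d ∈ [0,1]` there is `0 ≤ k ≤ d` such that exactly `k`
of the indices satisfy `t i > 1/(k+2)` and the remaining `d - k` satisfy `t i < 1/(k+2)`. -/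
theorem stmt12 (d : ℕ) (hd : 1 ≤ d) (t : Fin d → ℝ) (ht : ∀ i, t i ∈ Set.Icc (0 : ℝ) 1) :
    ∃ k : ℕ, k ≤ d ∧ ∃ A : Finset (Fin d), A.card = k ∧
      (∀ i ∈ A, 1 / ((k : ℝ) + 2) < t i) ∧
      (∀ i, i ∉ A → t i < 1 / ((k : ℝ) + 2)) := by
  obtain ⟨A, hA⟩ := stmt12_general (strictAnti_one_div_natCast_add two_pos) t
  exact ⟨#A, card_finset_fin_le A, A, rfl, hA⟩
end

section
/- Let d ≥ 1 be an integer and let P(x,y) be a real polynomial in two variables of total degree at most d which is not identically zero. Then the 1-dimensional Hausdorff measure of the set {(x,y) ∈ ℝ² : x² + y² ≤ 1 and P(x,y) = 0} is at most π·d. -/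
open MeasureTheory

/-!
The Cauchy–Crofton formula: the length of a plane curve is half the integral, over all lines, of the
number of points in which the line meets the curve. Only the inequality `≤` is needed. A direction
`θ` and a piece of the curve whose chords are all nearly orthogonal to the direction `α` satisfy
`(|sin (θ - α)| - 2ε) * length ≤ ∫ (number of points on the line {x | ⟪e_θ, x⟫ = p}) dp`, because
the projection to `ℝ e_θ` is injective on the piece and expands distances by at least that factor;
integrating over `θ ∈ (0, π]` gives `2 * length`, up to `O(ε)`. The zero set of a polynomial is cut
into countably many such pieces near its regular points, and its singular points are zeros of a
nonzero partial derivative, which has smaller degree.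

For a curve of degree at most `d`, almost every line of a given direction meets it in at most `d`
points, and the lines meeting the unit disk form an interval of length `2`. Hence
`2 * length ≤ π * 2 * d`.
-/

local notation "Plane" => EuclideanSpace ℝ (Fin 2)

section Lintegral

variable {Ω : Type*} [MeasurableSpace Ω] {μ : Measure Ω}

theorem sum_lintegral_le_lintegral_sum {ι : Type*} (s : Finset ι) (f : ι → Ω → ENNReal) :
    ∑ i ∈ s, ∫⁻ ω, f i ω ∂μ ≤ ∫⁻ ω, ∑ i ∈ s, f i ω ∂μ := by
  classical
  induction s using Finset.induction_on with
  | empty => simp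
  | insert i s hi ih =>
    simp only [Finset.sum_insert hi]
    exact (add_le_add_right ih _).trans (le_lintegral_add _ _)

theorem tsum_lintegral_le_lintegral_tsum {ι : Type*} (f : ι → Ω → ENNReal) :
    ∑' i, ∫⁻ ω, f i ω ∂μ ≤ ∫⁻ ω, ∑' i, f i ω ∂μ := by
  rw [ENNReal.tsum_eq_iSup_sum]
  exact iSup_le fun s => (sum_lintegral_le_lintegral_sum s f).trans
    (lintegral_mono fun _ => ENNReal.sum_le_tsum s)

theorem ofReal_integral_le_lintegral_ofReal (f : Ω → ℝ) :
    ENNReal.ofReal (∫ ω, f ω ∂μ) ≤ ∫⁻ ω, ENNReal.ofReal (f ω) ∂μ := by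
  by_cases hf : Integrable f μ
  · refine ENNReal.ofReal_le_of_le_toReal ?_
    rw [integral_eq_lintegral_pos_part_sub_lintegral_neg_part hf]
    exact sub_le_self _ ENNReal.toReal_nonneg
  · simp [integral_undef hf]

end Lintegral

theorem hausdorffMeasure_le_of_antilipschitzWith_domRestrict {X Y : Type*} [EMetricSpace X]
    [MeasurableSpace X] [BorelSpace X] [EMetricSpace Y] [MeasurableSpace Y] [BorelSpace Y]
    {K : NNReal} {A : Set X} {f : X → Y} (hf : AntilipschitzWith K (A.domRestrict f))
    {s : ℝ} (hs : 0 ≤ s) :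
    μH[s] A ≤ (K : ENNReal) ^ s * μH[s] (f '' A) := by
  have hle := hf.le_hausdorffMeasure_image hs Set.univ
  rwa [Set.image_univ, Set.range_domRestrict,
    ← isometry_subtype_coe.hausdorffMeasure_image (Or.inl hs), Set.image_univ,
    Subtype.range_coe] at hle

/-- The unit vector of the plane at angle `θ`. -/
noncomputable def angleVec (θ : ℝ) : Plane :=
  !₂[Real.cos θ, Real.sin θ]

/-- The coordinate of a point of the plane along `angleVec θ`; its level sets are the lines
orthogonal to `angleVec θ`. -/
noncomputable def planeProj (θ : ℝ) : Plane →L[ℝ] ℝ :=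
  innerSL ℝ (angleVec θ)

section Projection

theorem planeProj_apply (θ : ℝ) (x : Plane) :
    planeProj θ x = Real.cos θ * x 0 + Real.sin θ * x 1 := by
  simp [planeProj, angleVec, PiLp.inner_apply, Fin.sum_univ_two, mul_comm]

theorem norm_angleVec (θ : ℝ) : ‖angleVec θ‖ = 1 := by
  simp [angleVec, EuclideanSpace.norm_eq]

theorem abs_planeProj_le_norm (θ : ℝ) (x : Plane) : |planeProj θ x| ≤ ‖x‖ := by
  simpa [planeProj, norm_angleVec] using abs_real_inner_le_norm (angleVec θ) x

theorem planeProj_eq_cos_mul_add_sin_mul (θ α : ℝ) (x : Plane) :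
    planeProj θ x =
      Real.cos (θ - α) * planeProj α x + Real.sin (θ - α) * planeProj (α + Real.pi / 2) x := by
  simp only [planeProj_apply, Real.cos_sub, Real.sin_sub, Real.cos_add_pi_div_two,
    Real.sin_add_pi_div_two]
  linear_combination
    -(Real.cos θ * x 0 + Real.sin θ * x 1) * Real.sin_sq_add_cos_sq α

theorem planeProj_smul_angleVec_add (θ : ℝ) (x : Plane) :
    planeProj θ x • angleVec θ +
      planeProj (θ + Real.pi / 2) x • angleVec (θ + Real.pi / 2) = x := by
  ext j
  fin_cases j <;>
    simp only [planeProj_apply, angleVec, Real.cos_add_pi_div_two, Real.sin_add_pi_div_two,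
      PiLp.add_apply, PiLp.smul_apply, smul_eq_mul, Fin.zero_eta, Fin.mk_one,
      Matrix.cons_val_zero, Matrix.cons_val_one]
  · linear_combination x 0 * Real.sin_sq_add_cos_sq θ
  · linear_combination x 1 * Real.sin_sq_add_cos_sq θ

theorem norm_le_abs_planeProj_add (θ : ℝ) (x : Plane) :
    ‖x‖ ≤ |planeProj θ x| + |planeProj (θ + Real.pi / 2) x| := by
  calc ‖x‖ = ‖planeProj θ x • angleVec θ +
        planeProj (θ + Real.pi / 2) x • angleVec (θ + Real.pi / 2)‖ := by
        rw [planeProj_smul_angleVec_add]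
    _ ≤ |planeProj θ x| + |planeProj (θ + Real.pi / 2) x| := by
        refine (norm_add_le _ _).trans_eq ?_
        simp only [norm_smul, norm_angleVec, Real.norm_eq_abs, mul_one]

theorem exists_eq_norm_smul_angleVec (v : Plane) : ∃ α, v = ‖v‖ • angleVec α := by
  have hnorm : ‖(⟨v 0, v 1⟩ : ℂ)‖ = ‖v‖ := by
    simp [Complex.norm_eq_sqrt_sq_add_sq, EuclideanSpace.norm_eq]
  refine ⟨Complex.arg ⟨v 0, v 1⟩, ?_⟩
  ext j
  fin_cases j
  · simp [angleVec, ← hnorm, Complex.norm_mul_cos_arg]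
  · simp [angleVec, ← hnorm, Complex.norm_mul_sin_arg]

theorem exists_eq_norm_smul_planeProj (L : Plane →L[ℝ] ℝ) : ∃ α, L = ‖L‖ • planeProj α := by
  obtain ⟨α, hα⟩ := exists_eq_norm_smul_angleVec ((InnerProductSpace.toDual ℝ Plane).symm L)
  refine ⟨α, ?_⟩
  rw [LinearIsometryEquiv.norm_map] at hα
  rw [planeProj, ← map_smul, ← hα]
  ext x
  simp

theorem integral_abs_sin_sub (α : ℝ) : ∫ θ in (0 : ℝ)..Real.pi, |Real.sin (θ - α)| = 2 := by
  have hper : Function.Periodic (fun θ => |Real.sin θ|) Real.pi := fun θ => by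
    simp only [Real.sin_add_pi, abs_neg]
  calc ∫ θ in (0 : ℝ)..Real.pi, |Real.sin (θ - α)|
      = ∫ θ in (0 - α)..(0 - α + Real.pi), |Real.sin θ| := by
        rw [intervalIntegral.integral_comp_sub_right (fun θ => |Real.sin θ|) α,
          sub_add_eq_add_sub, zero_add]
    _ = ∫ θ in (0 : ℝ)..0 + Real.pi, |Real.sin θ| := hper.intervalIntegral_add_eq _ _
    _ = ∫ θ in (0 : ℝ)..Real.pi, Real.sin θ := by
        rw [zero_add]
        refine intervalIntegral.integral_congr fun θ hθ => abs_of_nonneg ?_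
        rw [Set.uIcc_of_le Real.pi_pos.le] at hθ
        exact Real.sin_nonneg_of_mem_Icc hθ
    _ = 2 := by
        rw [integral_sin, Real.cos_zero, Real.cos_pi]
        norm_num

theorem le_lintegral_abs_sin_sub (α ε : ℝ) :
    ENNReal.ofReal (2 - 2 * ε * Real.pi) ≤
      ∫⁻ θ in Set.Ioc 0 Real.pi, ENNReal.ofReal (|Real.sin (θ - α)| - 2 * ε) := by
  have hval : ∫ θ in Set.Ioc 0 Real.pi, (|Real.sin (θ - α)| - 2 * ε) = 2 - 2 * ε * Real.pi := by
    rw [← intervalIntegral.integral_of_le Real.pi_pos.le, intervalIntegral.integral_sub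
      (Continuous.intervalIntegrable (by fun_prop) _ _) intervalIntegrable_const,
      integral_abs_sin_sub, intervalIntegral.integral_const, sub_zero, smul_eq_mul, mul_comm]
  exact hval ▸ ofReal_integral_le_lintegral_ofReal _

end Projection

/-- The Crofton integral of a plane set: the integral over the lines `{x | planeProj θ x = p}`,
`θ ∈ (0, π]`, of the number of points in which the line meets the set. By the Crofton formula it is
twice the length of a rectifiable set. -/
noncomputable def croftonIntegral (E : Set Plane) : ENNReal :=
  ∫⁻ θ in Set.Ioc 0 Real.pi, ∫⁻ p, Measure.count (E ∩ planeProj θ ⁻¹' {p})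

/-- A plane set all of whose chords are orthogonal to the direction `α` up to an error of relative
size `ε`. -/
def IsFlat (ε α : ℝ) (A : Set Plane) : Prop :=
  ∀ x ∈ A, ∀ y ∈ A, |planeProj α (x - y)| ≤ ε * ‖x - y‖

section Crofton

variable {ε α : ℝ} {A E : Set Plane}

theorem measurableSet_inter_planeProj_preimage (hE : MeasurableSet E) (θ p : ℝ) :
    MeasurableSet (E ∩ planeProj θ ⁻¹' {p}) :=
  hE.inter ((planeProj θ).continuous.measurable (measurableSet_singleton p))

theorem tsum_croftonIntegral_le_croftonIntegral_iUnion {ι : Type*} [Countable ι]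
    {A : ι → Set Plane} (hA : ∀ i, MeasurableSet (A i))
    (hdisj : Pairwise (Function.onFun Disjoint A)) :
    ∑' i, croftonIntegral (A i) ≤ croftonIntegral (⋃ i, A i) := by
  refine (tsum_lintegral_le_lintegral_tsum _).trans (lintegral_mono fun θ => ?_)
  refine (tsum_lintegral_le_lintegral_tsum _).trans (lintegral_mono fun p => ?_)
  rw [Set.iUnion_inter, measure_iUnion
    (fun i j hij => (hdisj hij).mono Set.inter_subset_left Set.inter_subset_left)
    fun i => measurableSet_inter_planeProj_preimage (hA i) θ p]

theorem mul_hausdorffMeasure_iUnion_le_croftonIntegral {ι : Type*} [Countable ι]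
    {A : ι → Set Plane} (hA : ∀ i, MeasurableSet (A i))
    (hdisj : Pairwise (Function.onFun Disjoint A)) {c : ENNReal}
    (h : ∀ i, c * μH[1] (A i) ≤ croftonIntegral (A i)) :
    c * μH[1] (⋃ i, A i) ≤ croftonIntegral (⋃ i, A i) :=
  calc c * μH[1] (⋃ i, A i) = ∑' i, c * μH[1] (A i) := by
        rw [measure_iUnion hdisj hA, ENNReal.tsum_mul_left]
    _ ≤ ∑' i, croftonIntegral (A i) := ENNReal.tsum_le_tsum h
    _ ≤ croftonIntegral (⋃ i, A i) := tsum_croftonIntegral_le_croftonIntegral_iUnion hA hdisj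

theorem IsFlat.mul_norm_sub_le (hA : IsFlat ε α A) (θ : ℝ) {x y : Plane}
    (hx : x ∈ A) (hy : y ∈ A) :
    (|Real.sin (θ - α)| - 2 * ε) * ‖x - y‖ ≤ |planeProj θ (x - y)| := by
  set a := planeProj α (x - y)
  set b := planeProj (α + Real.pi / 2) (x - y)
  have ha : |a| ≤ ε * ‖x - y‖ := hA x hx y hy
  have hcos : |Real.cos (θ - α)| * |a| ≤ |a| :=
    mul_le_of_le_one_left (abs_nonneg a) (Real.abs_cos_le_one _)
  have hsin : |Real.sin (θ - α)| * |a| ≤ |a| :=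
    mul_le_of_le_one_left (abs_nonneg a) (Real.abs_sin_le_one _)
  have hnorm : |Real.sin (θ - α)| * ‖x - y‖ ≤ |Real.sin (θ - α)| * (|a| + |b|) := by
    gcongr
    exact norm_le_abs_planeProj_add α (x - y)
  calc (|Real.sin (θ - α)| - 2 * ε) * ‖x - y‖
      ≤ |Real.sin (θ - α) * b| - |Real.cos (θ - α) * a| := by
        rw [abs_mul, abs_mul]
        linarith
    _ ≤ |Real.cos (θ - α) * a + Real.sin (θ - α) * b| := by
        rw [add_comm]
        exact abs_sub_abs_le_abs_add _ _
    _ = |planeProj θ (x - y)| := by rw [← planeProj_eq_cos_mul_add_sin_mul]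

theorem IsFlat.antilipschitzWith_domRestrict (hA : IsFlat ε α A) {θ : ℝ}
    (h : 0 < |Real.sin (θ - α)| - 2 * ε) :
    AntilipschitzWith (Real.toNNReal (|Real.sin (θ - α)| - 2 * ε)⁻¹)
      (A.domRestrict (planeProj θ)) := by
  refine AntilipschitzWith.of_le_mul_dist fun x y => ?_
  rw [Real.coe_toNNReal _ (inv_nonneg.2 h.le), inv_mul_eq_div, le_div_iff₀ h, mul_comm,
    Subtype.dist_eq, dist_eq_norm, Real.dist_eq]
  simpa only [map_sub, Set.domRestrict_apply] using hA.mul_norm_sub_le θ x.2 y.2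

theorem volume_image_planeProj_le {θ : ℝ}
    (hA : MeasurableSet (planeProj θ '' A)) :
    volume (planeProj θ '' A) ≤ ∫⁻ p, Measure.count (A ∩ planeProj θ ⁻¹' {p}) := by
  rw [← lintegral_indicator_one hA]
  refine lintegral_mono (Set.indicator_le fun p hp => ?_)
  obtain ⟨x, hx, rfl⟩ := hp
  calc (1 : ENNReal) = Measure.count {x} := (Measure.count_singleton x).symm
    _ ≤ Measure.count (A ∩ planeProj θ ⁻¹' {planeProj θ x}) :=
      measure_mono (Set.singleton_subset_iff.2 ⟨hx, rfl⟩)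

theorem IsFlat.ofReal_mul_hausdorffMeasure_le (hA : IsFlat ε α A)
    (hm : MeasurableSet A) (θ : ℝ) :
    ENNReal.ofReal (|Real.sin (θ - α)| - 2 * ε) * μH[1] A ≤
      ∫⁻ p, Measure.count (A ∩ planeProj θ ⁻¹' {p}) := by
  rcases le_or_gt (|Real.sin (θ - α)| - 2 * ε) 0 with h | h
  · rw [ENNReal.ofReal_of_nonpos h, zero_mul]
    exact zero_le
  have hanti := hA.antilipschitzWith_domRestrict h
  have hmeas : MeasurableSet (planeProj θ '' A) :=
    hm.image_of_continuousOn_injOn (planeProj θ).continuous.continuousOn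
      (Set.injOn_iff_injective.2 hanti.injective)
  have hle := hausdorffMeasure_le_of_antilipschitzWith_domRestrict hanti zero_le_one
  rw [ENNReal.rpow_one, hausdorffMeasure_real] at hle
  calc ENNReal.ofReal (|Real.sin (θ - α)| - 2 * ε) * μH[1] A
      ≤ ENNReal.ofReal (|Real.sin (θ - α)| - 2 * ε) *
          (ENNReal.ofReal (|Real.sin (θ - α)| - 2 * ε)⁻¹ * volume (planeProj θ '' A)) := by
        gcongr
        exact hle
    _ = volume (planeProj θ '' A) := by
        rw [← mul_assoc, ← ENNReal.ofReal_mul h.le, mul_inv_cancel₀ h.ne', ENNReal.ofReal_one,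
          one_mul]
    _ ≤ ∫⁻ p, Measure.count (A ∩ planeProj θ ⁻¹' {p}) := volume_image_planeProj_le hmeas

theorem IsFlat.ofReal_mul_hausdorffMeasure_le_croftonIntegral
    (hA : IsFlat ε α A) (hm : MeasurableSet A) :
    ENNReal.ofReal (2 - 2 * ε * Real.pi) * μH[1] A ≤ croftonIntegral A :=
  calc ENNReal.ofReal (2 - 2 * ε * Real.pi) * μH[1] A
      ≤ (∫⁻ θ in Set.Ioc 0 Real.pi, ENNReal.ofReal (|Real.sin (θ - α)| - 2 * ε)) * μH[1] A := by
        gcongr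
        exact le_lintegral_abs_sin_sub α ε
    _ = ∫⁻ θ in Set.Ioc 0 Real.pi, ENNReal.ofReal (|Real.sin (θ - α)| - 2 * ε) * μH[1] A :=
        (lintegral_mul_const _ (by fun_prop)).symm
    _ ≤ croftonIntegral A := lintegral_mono fun θ => hA.ofReal_mul_hausdorffMeasure_le hm θ

theorem exists_isFlat_of_approximatesLinearOn {f : Plane → ℝ} {L : Plane →L[ℝ] ℝ} (hL : L ≠ 0)
    {δ : NNReal} (hf : ApproximatesLinearOn f L A (δ * ‖L‖₊))
    (hA : ∀ x ∈ A, f x = 0) : ∃ α, IsFlat δ α A := by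
  obtain ⟨α, hα⟩ := exists_eq_norm_smul_planeProj L
  refine ⟨α, fun x hx y hy => ?_⟩
  have hL0 : 0 < ‖L‖ := norm_pos_iff.2 hL
  have hval : ‖L‖ * |planeProj α (x - y)| = ‖L (x - y)‖ := by
    conv_rhs => rw [hα]
    simp
  have hle : ‖L (x - y)‖ ≤ δ * ‖L‖ * ‖x - y‖ := by
    simpa only [hA x hx, hA y hy, sub_self, zero_sub, norm_neg, NNReal.coe_mul, coe_nnnorm]
      using hf x hx y hy
  refine le_of_mul_le_mul_left ?_ hL0
  calc ‖L‖ * |planeProj α (x - y)| ≤ δ * ‖L‖ * ‖x - y‖ := hval.trans_le hle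
    _ = ‖L‖ * (δ * ‖x - y‖) := by ring

theorem exists_iUnion_isFlat_of_hasFDerivWithinAt {f : Plane → ℝ} {f' : Plane → Plane →L[ℝ] ℝ}
    (hE : MeasurableSet E) (hf : ∀ x ∈ E, HasFDerivWithinAt f (f' x) E x)
    (hf0 : ∀ x ∈ E, f x = 0) (hf' : ∀ x ∈ E, f' x ≠ 0) {δ : NNReal} (hδ : δ ≠ 0) :
    ∃ A : ℕ → Set Plane, (∀ i, MeasurableSet (A i)) ∧ (∀ i, ∃ α, IsFlat δ α (A i)) ∧
      Pairwise (Function.onFun Disjoint A) ∧ ⋃ i, A i = E := by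
  classical
  obtain ⟨t, L, hdisj, ht, hcover, happrox, hL⟩ :=
    exists_partition_approximatesLinearOn_of_hasFDerivWithinAt f E f' hf
      (fun L => if L = 0 then 1 else δ * ‖L‖₊) fun L => by split_ifs <;> simp [*]
  refine ⟨fun i => E ∩ t i, fun i => hE.inter (ht i), fun i => ?_,
    fun i j hij => (hdisj hij).mono Set.inter_subset_right Set.inter_subset_right, ?_⟩
  · rcases E.eq_empty_or_nonempty with rfl | hne
    · exact ⟨0, fun x hx => hx.1.elim⟩
    obtain ⟨y, hy, hLy⟩ := hL hne i
    have hL0 : L i ≠ 0 := hLy ▸ hf' y hy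
    refine exists_isFlat_of_approximatesLinearOn hL0 ?_ fun x hx => hf0 x hx.1
    simpa only [if_neg hL0] using happrox i
  · rw [← Set.inter_iUnion, Set.inter_eq_left.2 hcover]

theorem two_mul_hausdorffMeasure_le_croftonIntegral_of_hasFDerivWithinAt {f : Plane → ℝ}
    {f' : Plane → Plane →L[ℝ] ℝ} (hE : MeasurableSet E)
    (hf : ∀ x ∈ E, HasFDerivWithinAt f (f' x) E x) (hf0 : ∀ x ∈ E, f x = 0)
    (hf' : ∀ x ∈ E, f' x ≠ 0) : 2 * μH[1] E ≤ croftonIntegral E := by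
  have hle (δ : NNReal) (hδ : δ ≠ 0) :
      ENNReal.ofReal (2 - 2 * δ * Real.pi) * μH[1] E ≤ croftonIntegral E := by
    obtain ⟨A, hA, hflat, hdisj, rfl⟩ :=
      exists_iUnion_isFlat_of_hasFDerivWithinAt hE hf hf0 hf' hδ
    refine mul_hausdorffMeasure_iUnion_le_croftonIntegral hA hdisj fun i => ?_
    obtain ⟨α, hα⟩ := hflat i
    exact hα.ofReal_mul_hausdorffMeasure_le_croftonIntegral (hA i)
  have hlim : Filter.Tendsto (fun δ : NNReal => ENNReal.ofReal (2 - 2 * δ * Real.pi) * μH[1] E)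
      (nhdsWithin 0 {0}ᶜ) (nhds (2 * μH[1] E)) := by
    refine ENNReal.Tendsto.mul_const ?_ (Or.inl two_ne_zero)
    have hc : Continuous fun δ : NNReal => ENNReal.ofReal (2 - 2 * δ * Real.pi) :=
      ENNReal.continuous_ofReal.comp (by fun_prop)
    simpa using (hc.tendsto 0).mono_left nhdsWithin_le_nhds
  exact le_of_tendsto hlim (eventually_mem_nhdsWithin.mono hle)

theorem croftonIntegral_le_of_subset_closedBall {c : Plane} {r : ℝ} {d : ENNReal}
    (hE : E ⊆ Metric.closedBall c r)
    (hd : ∀ θ, ∀ᵐ p, Measure.count (E ∩ planeProj θ ⁻¹' {p}) ≤ d) :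
    croftonIntegral E ≤ d * ENNReal.ofReal (2 * r) * ENNReal.ofReal Real.pi := by
  have hline (θ : ℝ) :
      ∫⁻ p, Measure.count (E ∩ planeProj θ ⁻¹' {p}) ≤ d * ENNReal.ofReal (2 * r) := by
    rw [← Real.volume_closedBall (a := planeProj θ c),
      ← lintegral_indicator_const Metric.isClosed_closedBall.measurableSet]
    refine lintegral_mono_ae ?_
    filter_upwards [hd θ] with p hp
    refine Set.le_indicator_apply (fun _ => hp) fun hpc => ?_
    rw [nonpos_iff_eq_zero, Measure.count_eq_zero_iff, Set.eq_empty_iff_forall_notMem]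
    rintro x ⟨hx, rfl⟩
    refine hpc ?_
    rw [Metric.mem_closedBall, Real.dist_eq, ← map_sub]
    exact (abs_planeProj_le_norm θ _).trans (mem_closedBall_iff_norm.1 (hE hx))
  calc croftonIntegral E
      ≤ ∫⁻ _ in Set.Ioc 0 Real.pi, d * ENNReal.ofReal (2 * r) := lintegral_mono hline
    _ = d * ENNReal.ofReal (2 * r) * ENNReal.ofReal Real.pi := by
        rw [setLIntegral_const, Real.volume_Ioc, sub_zero]

end Crofton

section Polynomial

theorem totalDegree_pderiv_lt {σ R : Type*} [CommSemiring R] {P : MvPolynomial σ R} {i : σ}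
    (h : MvPolynomial.pderiv i P ≠ 0) :
    (MvPolynomial.pderiv i P).totalDegree < P.totalDegree := by
  obtain ⟨m, hm, hmd⟩ := Finset.exists_mem_eq_sup _ (MvPolynomial.support_nonempty.2 h)
    fun s => s.sum fun _ e => e
  have hc : MvPolynomial.coeff m (MvPolynomial.pderiv i P) ≠ 0 :=
    MvPolynomial.mem_support_iff.1 hm
  rw [MvPolynomial.coeff_pderiv] at hc
  have hle := MvPolynomial.le_totalDegree (MvPolynomial.mem_support_iff.2 (left_ne_zero_of_mul hc))
  rw [Finsupp.sum_add_index' (fun _ => rfl) (fun _ _ _ => rfl),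
    Finsupp.sum_single_index rfl] at hle
  rw [MvPolynomial.totalDegree, hmd]
  exact hle

theorem exists_pderiv_ne_zero {σ R : Type*} [CommSemiring R] [NoZeroDivisors R] [CharZero R]
    {P : MvPolynomial σ R} (h : P.totalDegree ≠ 0) : ∃ i, MvPolynomial.pderiv i P ≠ 0 := by
  rw [Ne, MvPolynomial.totalDegree_eq_zero_iff] at h
  push Not at h
  obtain ⟨m, hm, i, hi⟩ := h
  refine ⟨i, fun hz => ?_⟩
  have hle : Finsupp.single i 1 ≤ m := by
    rw [Finsupp.single_le_iff]
    omega
  have hc := MvPolynomial.coeff_pderiv P (i := i) (m - Finsupp.single i 1)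
  rw [hz, tsub_add_cancel_of_le hle, MvPolynomial.coeff_zero] at hc
  exact mul_ne_zero (MvPolynomial.mem_support_iff.1 hm) (Nat.cast_add_one_ne_zero _) hc.symm

theorem hasFDerivAt_eval {ι : Type*} [Fintype ι] (P : MvPolynomial ι ℝ)
    (x : EuclideanSpace ℝ ι) :
    HasFDerivAt (fun y : EuclideanSpace ℝ ι => MvPolynomial.eval (fun j => y j) P)
      (∑ i, MvPolynomial.eval (fun j => x j) (MvPolynomial.pderiv i P) •
        (EuclideanSpace.proj i : EuclideanSpace ℝ ι →L[ℝ] ℝ)) x := by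
  classical
  induction P using MvPolynomial.induction_on with
  | C a => simpa using hasFDerivAt_const (𝕜 := ℝ) a x
  | add p q hp hq =>
    simp only [map_add, add_smul, Finset.sum_add_distrib]
    exact hp.add hq
  | mul_X p k hp =>
    have hX : HasFDerivAt (fun y : EuclideanSpace ℝ ι => y k)
        (EuclideanSpace.proj k : EuclideanSpace ℝ ι →L[ℝ] ℝ) x :=
      (EuclideanSpace.proj k : EuclideanSpace ℝ ι →L[ℝ] ℝ).hasFDerivAt
    simp only [map_mul, MvPolynomial.eval_X]
    refine (hp.mul hX).congr_fderiv ?_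
    ext v
    simp [MvPolynomial.pderiv_X, Pi.single_apply, apply_ite, add_mul, Finset.sum_add_distrib,
      Finset.mul_sum, mul_assoc]

/-- The restriction `t ↦ P (a + t • v)` of a polynomial to a parametrised line, as a univariate
polynomial. -/
noncomputable def lineRestriction {σ R : Type*} [CommSemiring R] (P : MvPolynomial σ R)
    (a v : σ → R) : Polynomial R :=
  MvPolynomial.aeval (fun i => Polynomial.C (v i) * Polynomial.X + Polynomial.C (a i)) P

theorem eval_lineRestriction {σ R : Type*} [CommSemiring R] (P : MvPolynomial σ R) (a v : σ → R)
    (t : R) : (lineRestriction P a v).eval t = MvPolynomial.eval (a + t • v) P := by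
  rw [lineRestriction, ← Polynomial.coe_evalRingHom, ← MvPolynomial.eval₂_id,
    MvPolynomial.aeval_def, MvPolynomial.hom_eval₂]
  congr 1
  · ext; simp
  · ext j
    simp only [Polynomial.coe_evalRingHom, Polynomial.eval_add, Polynomial.eval_mul,
      Polynomial.eval_C, Polynomial.eval_X, Pi.add_apply, Pi.smul_apply, smul_eq_mul]
    ring

theorem natDegree_lineRestriction_le {σ R : Type*} [CommSemiring R] (P : MvPolynomial σ R)
    (a v : σ → R) : (lineRestriction P a v).natDegree ≤ P.totalDegree := by
  simpa only [lineRestriction, mul_one] using MvPolynomial.aeval_natDegree_le P le_rfl _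
    fun i => Polynomial.natDegree_linear_le (a := v i) (b := a i)

theorem finite_setOf_lineRestriction_smul_eq_zero {σ R : Type*} [CommRing R] [IsDomain R]
    {P : MvPolynomial σ R} {u v : σ → R} {p t : R}
    (h : MvPolynomial.eval (p • u + t • v) P ≠ 0) :
    {q : R | lineRestriction P (q • u) v = 0}.Finite := by
  have hne : lineRestriction P (t • v) u ≠ 0 := fun h0 => h (by
    rw [add_comm, ← eval_lineRestriction, h0, Polynomial.eval_zero])
  refine (Polynomial.finite_setOfPred_isRoot hne).subset fun q (hq : _ = 0) => ?_
  rw [Set.mem_ofPred_eq, Polynomial.IsRoot, eval_lineRestriction, add_comm,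
    ← eval_lineRestriction, hq, Polynomial.eval_zero]

end Polynomial

/-- The zero set of a bivariate real polynomial in the Euclidean plane. -/
def planeZeros (P : MvPolynomial (Fin 2) ℝ) : Set Plane :=
  {x | MvPolynomial.eval (fun j => x j) P = 0}

section PlaneZeros

variable {P : MvPolynomial (Fin 2) ℝ}

theorem measurableSet_planeZeros (P : MvPolynomial (Fin 2) ℝ) :
    MeasurableSet (planeZeros P) := by
  have hc : Continuous fun x : Plane => MvPolynomial.eval (fun j => x j) P :=
    P.continuous_eval.comp (by fun_prop)
  exact (isClosed_singleton.preimage hc).measurableSet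

theorem two_mul_hausdorffMeasure_le_croftonIntegral_of_pderiv_ne_zero {i : Fin 2} {E : Set Plane}
    (hE : MeasurableSet E) (hEP : E ⊆ planeZeros P)
    (hi : Disjoint E (planeZeros (MvPolynomial.pderiv i P))) :
    2 * μH[1] E ≤ croftonIntegral E := by
  refine two_mul_hausdorffMeasure_le_croftonIntegral_of_hasFDerivWithinAt hE
    (fun x _ => (hasFDerivAt_eval P x).hasFDerivWithinAt) hEP fun x hx h => ?_
  refine Set.disjoint_left.1 hi hx ?_
  have happly := DFunLike.congr_fun h (EuclideanSpace.single i 1)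
  simpa [planeZeros, -Fin.sum_univ_two] using happly

theorem planeZeros_eq_empty_of_totalDegree_eq_zero (hP : P ≠ 0) (h : P.totalDegree = 0) :
    planeZeros P = ∅ := by
  rw [MvPolynomial.totalDegree_eq_zero_iff_eq_C] at h
  have h0 : P.coeff 0 ≠ 0 := fun h0 => hP (by rw [h, h0, map_zero])
  refine Set.eq_empty_of_forall_notMem fun x hx => h0 ?_
  rwa [planeZeros, Set.mem_ofPred_eq, h, MvPolynomial.eval_C] at hx

theorem two_mul_hausdorffMeasure_le_croftonIntegral_of_subset_planeZeros (hP : P ≠ 0)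
    {E : Set Plane} (hE : MeasurableSet E) (hEP : E ⊆ planeZeros P) :
    2 * μH[1] E ≤ croftonIntegral E := by
  induction hn : P.totalDegree using Nat.strong_induction_on generalizing P E with
  | _ n ih =>
  by_cases hdeg : P.totalDegree = 0
  · rw [planeZeros_eq_empty_of_totalDegree_eq_zero hP hdeg, Set.subset_empty_iff] at hEP
    simp [hEP]
  obtain ⟨i, hi⟩ := exists_pderiv_ne_zero hdeg
  set Z := planeZeros (MvPolynomial.pderiv i P)
  have hZ : MeasurableSet Z := measurableSet_planeZeros _
  have hsing : 2 * μH[1] (E ∩ Z) ≤ croftonIntegral (E ∩ Z) :=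
    ih _ (hn ▸ totalDegree_pderiv_lt hi) hi (hE.inter hZ) Set.inter_subset_right rfl
  have hreg : 2 * μH[1] (E \ Z) ≤ croftonIntegral (E \ Z) :=
    two_mul_hausdorffMeasure_le_croftonIntegral_of_pderiv_ne_zero (hE.diff hZ)
      (Set.sdiff_subset.trans hEP) Set.disjoint_sdiff_left
  rw [← Set.inter_union_sdiff E Z, Set.union_eq_iUnion]
  exact mul_hausdorffMeasure_iUnion_le_croftonIntegral
    (Bool.forall_bool.2 ⟨hE.diff hZ, hE.inter hZ⟩)
    (pairwise_disjoint_on_bool.2 Set.disjoint_sdiff_inter.symm)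
    (Bool.forall_bool.2 ⟨hreg, hsing⟩)

theorem count_planeZeros_inter_le {θ p : ℝ}
    (h : lineRestriction P (p • angleVec θ).ofLp (angleVec (θ + Real.pi / 2)) ≠ 0) :
    Measure.count (planeZeros P ∩ planeProj θ ⁻¹' {p}) ≤ P.totalDegree := by
  classical
  set q := lineRestriction P (p • angleVec θ).ofLp (angleVec (θ + Real.pi / 2))
  set T := q.roots.toFinset.image fun t => p • angleVec θ + t • angleVec (θ + Real.pi / 2)
  have hsub : planeZeros P ∩ planeProj θ ⁻¹' {p} ⊆ T := by
    rintro x ⟨hx, rfl⟩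
    have hdec := planeProj_smul_angleVec_add θ x
    refine Finset.mem_image.2 ⟨planeProj (θ + Real.pi / 2) x, ?_, hdec⟩
    rw [Multiset.mem_toFinset, Polynomial.mem_roots h, Polynomial.IsRoot, eval_lineRestriction]
    exact (congrArg (fun y : Plane => MvPolynomial.eval y.ofLp P) hdec).trans hx
  have hcard : T.card ≤ P.totalDegree :=
    calc T.card ≤ q.roots.toFinset.card := Finset.card_image_le
      _ ≤ q.roots.card := Multiset.toFinset_card_le _
      _ ≤ q.natDegree := q.card_roots'
      _ ≤ P.totalDegree := natDegree_lineRestriction_le P _ _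
  calc Measure.count (planeZeros P ∩ planeProj θ ⁻¹' {p})
      ≤ Measure.count (T : Set Plane) := measure_mono hsub
    _ = T.card := Measure.count_apply_finset T
    _ ≤ P.totalDegree := Nat.cast_le.2 hcard

theorem ae_count_planeZeros_inter_le (hP : P ≠ 0) (θ : ℝ) :
    ∀ᵐ p, Measure.count (planeZeros P ∩ planeProj θ ⁻¹' {p}) ≤ P.totalDegree := by
  obtain ⟨x, hx⟩ : ∃ x : Fin 2 → ℝ, MvPolynomial.eval x P ≠ 0 := by
    by_contra! h
    exact hP (MvPolynomial.funext fun x => by simpa using h x)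
  rw [← WithLp.ofLp_toLp 2 x, ← planeProj_smul_angleVec_add θ (WithLp.toLp 2 x)] at hx
  filter_upwards [(finite_setOf_lineRestriction_smul_eq_zero hx).countable.ae_notMem volume]
    with p hp using count_planeZeros_inter_le hp

theorem hausdorffMeasure_planeZeros_inter_closedBall_le (hP : P ≠ 0) (c : Plane) (r : ℝ) :
    μH[1] (planeZeros P ∩ Metric.closedBall c r) ≤
      ENNReal.ofReal (Real.pi * (P.totalDegree * r)) := by
  have hcrofton := two_mul_hausdorffMeasure_le_croftonIntegral_of_subset_planeZeros hP
    ((measurableSet_planeZeros P).inter Metric.isClosed_closedBall.measurableSet)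
    (Set.inter_subset_left (t := Metric.closedBall c r))
  have hlines : croftonIntegral (planeZeros P ∩ Metric.closedBall c r) ≤
      P.totalDegree * ENNReal.ofReal (2 * r) * ENNReal.ofReal Real.pi :=
    croftonIntegral_le_of_subset_closedBall Set.inter_subset_right fun θ =>
      (ae_count_planeZeros_inter_le hP θ).mono fun p hp =>
        (measure_mono (Set.inter_subset_inter_left _ Set.inter_subset_left)).trans hp
  rw [← ENNReal.mul_le_mul_iff_right two_ne_zero ENNReal.ofNat_ne_top]
  calc 2 * μH[1] (planeZeros P ∩ Metric.closedBall c r)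
      ≤ P.totalDegree * ENNReal.ofReal (2 * r) * ENNReal.ofReal Real.pi := hcrofton.trans hlines
    _ = 2 * ENNReal.ofReal (Real.pi * (P.totalDegree * r)) := by
        rw [ENNReal.ofReal_mul zero_le_two, ENNReal.ofReal_mul Real.pi_pos.le,
          ENNReal.ofReal_mul (Nat.cast_nonneg _), ENNReal.ofReal_natCast, ENNReal.ofReal_ofNat]
        ring

end PlaneZeros

/-- A real algebraic curve of degree `d` intersected with the closed
unit disk has 1-dimensional Hausdorff measure (length) at most `π d`. -/
theorem stmt13 (d : ℕ) (hd : 1 ≤ d) (P : MvPolynomial (Fin 2) ℝ) (hP : P ≠ 0)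
    (hdeg : P.totalDegree ≤ d) :
    μH[1] {x : EuclideanSpace ℝ (Fin 2) | ‖x‖ ≤ 1 ∧ MvPolynomial.eval (fun j => x j) P = 0}
      ≤ ENNReal.ofReal (Real.pi * d) := by
  have hset : {x : Plane | ‖x‖ ≤ 1 ∧ MvPolynomial.eval (fun j => x j) P = 0} =
      planeZeros P ∩ Metric.closedBall 0 1 := by
    ext x
    simp [planeZeros, and_comm]
  calc μH[1] {x : Plane | ‖x‖ ≤ 1 ∧ MvPolynomial.eval (fun j => x j) P = 0}
      ≤ ENNReal.ofReal (Real.pi * (P.totalDegree * 1)) :=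
        hset ▸ hausdorffMeasure_planeZeros_inter_closedBall_le hP 0 1
    _ ≤ ENNReal.ofReal (Real.pi * d) := by
        rw [mul_one]
        gcongr
end
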